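/- There exist constants ε₀ ∈ (0,1) and C > 0, depending only on n, κ0, κ1 and C₀, such that for every ε ∈ (0, ε₀), every harmonic function u on Ω₁ with boundary values φ on Γ₁⁺ and ψ on Γ₁⁻, and w := u − ũ: (i) for every x₀ = (x₀', x₀,n) ∈ Ω_{1/2} with |x₀'| ≤ √ε, setting δ = δ(x₀'), ∫_{Ω̂_δ(x₀)} |∇w|² dx ≤ C·ε^n·[ |φ(x₀') − ψ(x₀')|² + ε·(‖w‖²_{L²(Ω₁)} + ‖φ‖²_{C²} + ‖ψ‖²_{C²}) ]; (ii) for every x₀ ∈ Ω_{1/2} with √ε < |x₀'| < 1/2, ∫_{Ω̂_δ(x₀)} |∇w|² dx ≤ C·|x₀'|^{2n}·[ |φ(x₀') − ψ(x₀')|² + |x₀'|²·(‖w‖²_{L²(Ω₁)} + ‖φ‖²_{C²} + ‖ψ‖²_{C²}) ]. -/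

import Mathlib

open MeasureTheory Metric Finset

noncomputable section

/-- `ℝ^{n-1}`, the horizontal (tangential) variables `x'`. -/
abbrev Ep (n : ℕ) := EuclideanSpace ℝ (Fin (n - 1))

/-- `ℝ^n = ℝ^{n-1} × ℝ`, points written `x = (x', x_n)`. -/
abbrev Efull (n : ℕ) := Ep n × ℝ

/-- The narrow region `Ω_r`. -/
def Omega (n : ℕ) (ε : ℝ) (h1 h2 : Ep n → ℝ) (r : ℝ) : Set (Efull n) :=
  {x | ‖x.1‖ < r ∧ -ε/2 + h2 x.1 < x.2 ∧ x.2 < ε/2 + h1 x.1}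

/-- Top boundary `Γ_r⁺`. -/
def Gammap (n : ℕ) (ε : ℝ) (h1 : Ep n → ℝ) (r : ℝ) : Set (Efull n) :=
  {x | ‖x.1‖ ≤ r ∧ x.2 = ε/2 + h1 x.1}

/-- Bottom boundary `Γ_r⁻`. -/
def Gammam (n : ℕ) (ε : ℝ) (h2 : Ep n → ℝ) (r : ℝ) : Set (Efull n) :=
  {x | ‖x.1‖ ≤ r ∧ x.2 = -ε/2 + h2 x.1}

/-- `Ω̂_s(x₀) = {x ∈ Ω_{1/2} : |x' - x₀'| < s}`. -/
def OmegaHat (n : ℕ) (ε : ℝ) (h1 h2 : Ep n → ℝ) (x0 : Efull n) (s : ℝ) : Set (Efull n) :=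
  {x | x ∈ Omega n ε h1 h2 (1/2) ∧ ‖x.1 - x0.1‖ < s}

/-- The `n` coordinate directions of `ℝ^{n-1} × ℝ`: the first `n-1` are the horizontal
Euclidean basis vectors, the last is the vertical direction. -/
def dir (n : ℕ) (α : Fin n) : Efull n :=
  if h : (α : ℕ) < n - 1 then (EuclideanSpace.single (⟨(α : ℕ), h⟩ : Fin (n - 1)) 1, (0:ℝ))
  else (0, 1)

/-- Tangential direction `e_α` for `α ∈ {1, …, n-1}`. -/
def tang (n : ℕ) (α : Fin (n - 1)) : Efull n := (EuclideanSpace.single α 1, (0:ℝ))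

/-- Vertical direction `e_n`. -/
def vert (n : ℕ) : Efull n := (0, 1)

/-- Pointwise Laplacian `Δu = Σ_α ∂_α∂_α u`. -/
def lapl (n : ℕ) (u : Efull n → ℝ) (x : Efull n) : ℝ :=
  ∑ α : Fin n, fderiv ℝ (fun y => fderiv ℝ u y (dir n α)) x (dir n α)

/-- The auxiliary function `ū(x', x_n) = (x_n - h2(x') + ε/2)/(ε + h1(x') - h2(x'))`. -/
def ubar (n : ℕ) (ε : ℝ) (h1 h2 : Ep n → ℝ) (x : Efull n) : ℝ :=
  (x.2 - h2 x.1 + ε/2) / (ε + h1 x.1 - h2 x.1)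

/-- The auxiliary function `ũ = φ(x')·ū + ψ(x')·(1 - ū)`. -/
def util (n : ℕ) (ε : ℝ) (h1 h2 φ ψ : Ep n → ℝ) (x : Efull n) : ℝ :=
  φ x.1 * ubar n ε h1 h2 x + ψ x.1 * (1 - ubar n ε h1 h2 x)

/-- `C²`-norm on the closed unit ball: `sup_{|x'| ≤ 1} (|f| + |∇f| + |∇²f|)`. -/
def C2norm {F : Type*} [NormedAddCommGroup F] [NormedSpace ℝ F] (n : ℕ)
    (f : Ep n → F) : ℝ :=
  ⨆ y : closedBall (0 : Ep n) 1,
    (‖f (y : Ep n)‖ + ‖fderiv ℝ f (y : Ep n)‖ + ‖fderiv ℝ (fderiv ℝ f) (y : Ep n)‖)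

/-- `C²(S)`-norm of a function on `ℝ^n`. -/
def C2normOn (n : ℕ) (S : Set (Efull n)) (f : Efull n → ℝ) : ℝ :=
  ⨆ y : S,
    (‖f (y : Efull n)‖ + ‖fderiv ℝ f (y : Efull n)‖ + ‖fderiv ℝ (fderiv ℝ f) (y : Efull n)‖)

/-- `‖∇f‖_∞ = sup_{|x'| ≤ 1} |∇f(x')|`. -/
def gradSup {F : Type*} [NormedAddCommGroup F] [NormedSpace ℝ F] (n : ℕ) (f : Ep n → F) : ℝ :=
  ⨆ y : closedBall (0 : Ep n) 1, ‖fderiv ℝ f (y : Ep n)‖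

/-- `‖∇²f‖_∞ = sup_{|x'| ≤ 1} |∇²f(x')|`. -/
def hessSup {F : Type*} [NormedAddCommGroup F] [NormedSpace ℝ F] (n : ℕ) (f : Ep n → F) : ℝ :=
  ⨆ y : closedBall (0 : Ep n) 1, ‖fderiv ℝ (fderiv ℝ f) (y : Ep n)‖

/-- The geometric hypotheses on `h1, h2`: `C²` on the closed unit ball, the two graphs
do not touch, flatness at the origin, strict convexity of the gap, and `C²`-bound `κ1`. -/
def HGeom (n : ℕ) (ε κ0 κ1 : ℝ) (h1 h2 : Ep n → ℝ) : Prop :=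
  ContDiffOn ℝ 2 h1 (closedBall 0 1) ∧ ContDiffOn ℝ 2 h2 (closedBall 0 1) ∧
  (∀ y : Ep n, ‖y‖ ≤ 1 → -ε/2 + h2 y < ε/2 + h1 y) ∧
  h1 0 = 0 ∧ h2 0 = 0 ∧ fderiv ℝ h1 0 = 0 ∧ fderiv ℝ h2 0 = 0 ∧
  (∀ v : Ep n, κ0 * ‖v‖^2 ≤ fderiv ℝ (fderiv ℝ (fun y => h1 y - h2 y)) 0 v v) ∧
  C2norm n h1 + C2norm n h2 ≤ κ1

/-- Comparability `(ε + |x'|²)/C₀ ≤ δ(x') ≤ C₀ (ε + |x'|²)`. -/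
def DeltaComp (n : ℕ) (ε C₀ : ℝ) (h1 h2 : Ep n → ℝ) : Prop :=
  ∀ y : Ep n, ‖y‖ ≤ 1 →
    (ε + ‖y‖^2) / C₀ ≤ ε + h1 y - h2 y ∧ ε + h1 y - h2 y ≤ C₀ * (ε + ‖y‖^2)

/-- Hypotheses on the coefficients: `C²`-regularity with total `C²(Ω₁)`-norm at most `κ2`,
boundedness `|A| ≤ Λ`, and the weak ellipticity (Legendre) condition with constant `λ`. -/
def CoeffHyp (n N : ℕ) (ε lam Lam κ2 : ℝ) (h1 h2 : Ep n → ℝ)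
    (A : Fin n → Fin n → Fin N → Fin N → Efull n → ℝ)
    (B : Fin n → Fin N → Fin N → Efull n → ℝ)
    (Cc : Fin n → Fin N → Fin N → Efull n → ℝ)
    (Dc : Fin N → Fin N → Efull n → ℝ) : Prop :=
  (∀ α β i j, ContDiffOn ℝ 2 (A α β i j) (Omega n ε h1 h2 1)) ∧
  (∀ α i j, ContDiffOn ℝ 2 (B α i j) (Omega n ε h1 h2 1)) ∧
  (∀ β i j, ContDiffOn ℝ 2 (Cc β i j) (Omega n ε h1 h2 1)) ∧
  (∀ i j, ContDiffOn ℝ 2 (Dc i j) (Omega n ε h1 h2 1)) ∧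
  ((∑ α : Fin n, ∑ β : Fin n, ∑ i : Fin N, ∑ j : Fin N,
      C2normOn n (Omega n ε h1 h2 1) (A α β i j)) +
   (∑ α : Fin n, ∑ i : Fin N, ∑ j : Fin N, C2normOn n (Omega n ε h1 h2 1) (B α i j)) +
   (∑ β : Fin n, ∑ i : Fin N, ∑ j : Fin N, C2normOn n (Omega n ε h1 h2 1) (Cc β i j)) +
   (∑ i : Fin N, ∑ j : Fin N, C2normOn n (Omega n ε h1 h2 1) (Dc i j)) ≤ κ2) ∧
  (∀ α β i j, ∀ x ∈ Omega n ε h1 h2 1, |A α β i j x| ≤ Lam) ∧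
  (∀ ξ : Efull n → EuclideanSpace ℝ (Fin N), ContDiff ℝ (⊤ : ℕ∞) ξ →
    HasCompactSupport ξ → tsupport ξ ⊆ Omega n ε h1 h2 1 →
    lam * ∫ x in Omega n ε h1 h2 1, ‖fderiv ℝ ξ x‖^2 ≤
      ∫ x in Omega n ε h1 h2 1,
        ∑ α : Fin n, ∑ β : Fin n, ∑ i : Fin N, ∑ j : Fin N,
          A α β i j x * fderiv ℝ ξ x (dir n α) i * fderiv ℝ ξ x (dir n β) j)

/-- `u` is a weak solution of
`∂_α(A^{αβ}_{ij} ∂_β u^j + B^α_{ij} u^j) + C^β_{ij} ∂_β u^j + D_{ij} u^j = 0` in `Ω₁`. -/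
def WeakSol (n N : ℕ) (ε : ℝ) (h1 h2 : Ep n → ℝ)
    (A : Fin n → Fin n → Fin N → Fin N → Efull n → ℝ)
    (B : Fin n → Fin N → Fin N → Efull n → ℝ)
    (Cc : Fin n → Fin N → Fin N → Efull n → ℝ)
    (Dc : Fin N → Fin N → Efull n → ℝ)
    (u : Efull n → EuclideanSpace ℝ (Fin N)) : Prop :=
  ContDiffOn ℝ 1 u (Omega n ε h1 h2 1) ∧
  IntegrableOn (fun x => ‖u x‖^2 + ‖fderiv ℝ u x‖^2) (Omega n ε h1 h2 1) ∧
  ∀ ζ : Efull n → EuclideanSpace ℝ (Fin N), ContDiff ℝ (⊤ : ℕ∞) ζ →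
    HasCompactSupport ζ → tsupport ζ ⊆ Omega n ε h1 h2 1 →
    (∫ x in Omega n ε h1 h2 1,
      ((∑ α : Fin n, ∑ i : Fin N,
          ((∑ β : Fin n, ∑ j : Fin N, A α β i j x * fderiv ℝ u x (dir n β) j) +
            ∑ j : Fin N, B α i j x * u x j) * fderiv ℝ ζ x (dir n α) i) -
        ∑ i : Fin N,
          ((∑ β : Fin n, ∑ j : Fin N, Cc β i j x * fderiv ℝ u x (dir n β) j) +
            ∑ j : Fin N, Dc i j x * u x j) * ζ x i)) = 0

/-- `u` attains the boundary values `(φ, ψ)` on `Γ₁⁺` and `Γ₁⁻`. -/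
def AttainsBV {F : Type*} [NormedAddCommGroup F] [NormedSpace ℝ F] (n : ℕ) (ε : ℝ)
    (h1 h2 : Ep n → ℝ) (u : Efull n → F) (φ ψ : Ep n → F) : Prop :=
  ContinuousOn u (Omega n ε h1 h2 1 ∪ Gammap n ε h1 1 ∪ Gammam n ε h2 1) ∧
  (∀ y : Ep n, ‖y‖ ≤ 1 → u (y, ε/2 + h1 y) = φ y ∧ u (y, -ε/2 + h2 y) = ψ y)

/-- `u` is a harmonic function on `Ω₁` with boundary values `φ` on `Γ₁⁺` and `ψ` on `Γ₁⁻`. -/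
def HarmBV (n : ℕ) (ε : ℝ) (h1 h2 : Ep n → ℝ) (u : Efull n → ℝ) (φ ψ : Ep n → ℝ) : Prop :=
  ContDiffOn ℝ 2 u (Omega n ε h1 h2 1) ∧
  (∀ x ∈ Omega n ε h1 h2 1, lapl n u x = 0) ∧
  IntegrableOn (fun x => ‖u x‖^2 + ‖fderiv ℝ u x‖^2) (Omega n ε h1 h2 1) ∧
  AttainsBV n ε h1 h2 u φ ψ

/-!
Write `D = ε + |x₀'|²`, which is comparable with the width of the gap at `x₀'`. The difference
`w = u - ũ` vanishes on both graphs and solves `Δw = -Δũ`. Testing this equation with `η²w` for the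
weight `η = χ(x') (1 + a²|x' - x₀'|²)^{-(n+1)}`, `a = ρ/D`, the terms containing `∇η` are controlled
by `∫ η²|w|²/δ²`, because `|∇η| ≤ cη/δ` with a small `c` where `|x' - x₀'| ≤ ρ`; by the Poincaré
inequality across the gap they are absorbed by `∫ η²|∇w|²`. The decay of `η` leaves only
`O(D^{4(n+1)}) ∫ |w|²` from the remaining part of `Ω₁`, so that one weighted estimate replaces an
iteration over shrinking cylinders.

The interpolant `ũ` is affine in `x_n`, whence
`|δΔũ|² ≤ C(|φ(x₀') - ψ(x₀')|² + (‖φ‖ + ‖ψ‖)²(D + |x' - x₀'|²))`; integrated against `η²`, which is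
concentrated on a set of volume `≈ D^n`, this gives the local energy bound with `D` in place of `ε`
or `|x₀'|²`.
Finally `D ≤ 2ε` if `|x₀'| ≤ √ε`, and `D ≤ 2|x₀'|²` otherwise.
-/

section

open Filter Topology

/-! ### The `C²` norm -/

section FDerivWithin

variable {E F : Type*} [NormedAddCommGroup E] [NormedSpace ℝ E] [NormedAddCommGroup F]
  [NormedSpace ℝ F] {s : Set E} {f : E → F} {x : E}

lemma norm_fderiv_le_norm_fderivWithin (hs : UniqueDiffWithinAt ℝ s x) :
    ‖fderiv ℝ f x‖ ≤ ‖fderivWithin ℝ f s x‖ := by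
  by_cases hf : DifferentiableAt ℝ f x
  · rw [hf.fderivWithin hs]
  · rw [fderiv_zero_of_not_differentiableAt hf, norm_zero]
    exact norm_nonneg _

lemma fderivWithin_eq_fderiv_of_continuousAt (hs : x ∈ closure (interior s))
    (hc : ContinuousWithinAt (fderivWithin ℝ f s) s x) (hc' : ContinuousAt (fderiv ℝ f) x) :
    fderivWithin ℝ f s x = fderiv ℝ f x := by
  have : (𝓝[interior s] x).NeBot := mem_closure_iff_nhdsWithin_neBot.1 hs
  refine tendsto_nhds_unique ((hc.mono interior_subset).congr' ?_) hc'.continuousWithinAt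
  filter_upwards [self_mem_nhdsWithin] with y hy
  exact fderivWithin_of_mem_nhds (mem_interior_iff_mem_nhds.1 hy)

lemma norm_fderiv_fderiv_le_norm_fderivWithin (hs : Convex ℝ s) (hne : (interior s).Nonempty)
    (hf : ContDiffOn ℝ 2 f s) (hx : x ∈ s) :
    ‖fderiv ℝ (fderiv ℝ f) x‖ ≤ ‖fderivWithin ℝ (fderivWithin ℝ f s) s x‖ := by
  by_cases hd : DifferentiableAt ℝ (fderiv ℝ f) x
  · have hcl : x ∈ closure (interior s) := by
      rw [hs.closure_interior_eq_closure_of_nonempty_interior hne]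
      exact subset_closure hx
    have hU : UniqueDiffWithinAt ℝ (interior s) x :=
      uniqueDiffWithinAt_convex hs.interior (by rwa [interior_interior]) hcl
    have hf' : ContDiffOn ℝ 1 (fderivWithin ℝ f s) s :=
      hf.fderivWithin (uniqueDiffOn_convex hs hne) (by norm_num)
    have hinside : ∀ y ∈ interior s, fderivWithin ℝ f s y = fderiv ℝ f y := fun y hy =>
      fderivWithin_of_mem_nhds (mem_interior_iff_mem_nhds.1 hy)
    have hat : fderivWithin ℝ f s x = fderiv ℝ f x :=
      fderivWithin_eq_fderiv_of_continuousAt hcl (hf'.continuousOn x hx) hd.continuousAt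
    have hwithin := ((hf'.differentiableOn one_ne_zero x hx).hasFDerivWithinAt).mono interior_subset
    rw [hU.eq (hd.hasFDerivAt.hasFDerivWithinAt.congr hinside hat) hwithin]
  · rw [fderiv_zero_of_not_differentiableAt hd, norm_zero (E := E →L[ℝ] E →L[ℝ] F)]
    exact norm_nonneg (E := E →L[ℝ] E →L[ℝ] F) _

end FDerivWithin

section C2norm

variable {n : ℕ} {F : Type*} [NormedAddCommGroup F] [NormedSpace ℝ F] {f : Ep n → F} {y z : Ep n}

/- On the boundary sphere `fderiv` is the unrestricted derivative, possibly the junk value `0`, so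
continuity of the derivatives up to the boundary has to be taken from `fderivWithin`. -/
lemma C2norm_bddAbove (hf : ContDiffOn ℝ 2 f (closedBall 0 1)) :
    BddAbove (Set.range fun y : closedBall (0 : Ep n) 1 =>
      ‖f (y : Ep n)‖ + ‖fderiv ℝ f (y : Ep n)‖ + ‖fderiv ℝ (fderiv ℝ f) (y : Ep n)‖) := by
  have hB : Convex ℝ (closedBall (0 : Ep n) 1) := convex_closedBall 0 1
  have hne : (interior (closedBall (0 : Ep n) 1)).Nonempty :=
    ⟨0, mem_interior_iff_mem_nhds.2 (closedBall_mem_nhds _ one_pos)⟩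
  have hU := uniqueDiffOn_convex hB hne
  have hf' := hf.fderivWithin hU (m := 1) (by norm_num)
  have hcpt : IsCompact (closedBall (0 : Ep n) 1) := isCompact_closedBall 0 1
  obtain ⟨a, ha⟩ := hcpt.exists_bound_of_continuousOn hf.continuousOn
  obtain ⟨b, hb⟩ := hcpt.exists_bound_of_continuousOn hf'.continuousOn
  obtain ⟨c, hc⟩ := hcpt.exists_bound_of_continuousOn (E := Ep n →L[ℝ] Ep n →L[ℝ] F)
    (hf'.continuousOn_fderivWithin hU le_rfl)
  refine ⟨a + b + c, ?_⟩
  rintro _ ⟨⟨y, hy⟩, rfl⟩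
  exact add_le_add (add_le_add (ha y hy)
    ((norm_fderiv_le_norm_fderivWithin (hU y hy)).trans (hb y hy)))
    ((norm_fderiv_fderiv_le_norm_fderivWithin hB hne hf hy).trans (hc y hy))

lemma C2norm_nonneg (f : Ep n → F) : 0 ≤ C2norm n f :=
  Real.iSup_nonneg fun _ => by positivity

lemma norm_add_norm_fderiv_add_norm_fderiv_fderiv_le_C2norm
    (hf : ContDiffOn ℝ 2 f (closedBall 0 1)) (hy : ‖y‖ ≤ 1) :
    ‖f y‖ + ‖fderiv ℝ f y‖ + ‖fderiv ℝ (fderiv ℝ f) y‖ ≤ C2norm n f :=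
  le_ciSup (C2norm_bddAbove hf) ⟨y, by simpa using hy⟩

lemma norm_le_C2norm (hf : ContDiffOn ℝ 2 f (closedBall 0 1)) (hy : ‖y‖ ≤ 1) :
    ‖f y‖ ≤ C2norm n f := by
  linarith [norm_add_norm_fderiv_add_norm_fderiv_fderiv_le_C2norm hf hy,
    norm_nonneg (fderiv ℝ f y), norm_nonneg (fderiv ℝ (fderiv ℝ f) y)]

lemma norm_fderiv_le_C2norm (hf : ContDiffOn ℝ 2 f (closedBall 0 1)) (hy : ‖y‖ ≤ 1) :
    ‖fderiv ℝ f y‖ ≤ C2norm n f := by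
  linarith [norm_add_norm_fderiv_add_norm_fderiv_fderiv_le_C2norm hf hy,
    norm_nonneg (f y), norm_nonneg (fderiv ℝ (fderiv ℝ f) y)]

lemma norm_fderiv_fderiv_le_C2norm (hf : ContDiffOn ℝ 2 f (closedBall 0 1)) (hy : ‖y‖ ≤ 1) :
    ‖fderiv ℝ (fderiv ℝ f) y‖ ≤ C2norm n f := by
  linarith [norm_add_norm_fderiv_add_norm_fderiv_fderiv_le_C2norm hf hy,
    norm_nonneg (f y), norm_nonneg (fderiv ℝ f y)]

lemma contDiffAt_two_of_norm_lt_one (hf : ContDiffOn ℝ 2 f (closedBall 0 1)) (hy : ‖y‖ < 1) :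
    ContDiffAt ℝ 2 f y :=
  hf.contDiffAt (closedBall_mem_nhds_of_mem (by simpa using hy))

lemma differentiableAt_fderiv_of_norm_lt_one (hf : ContDiffOn ℝ 2 f (closedBall 0 1))
    (hy : ‖y‖ < 1) : DifferentiableAt ℝ (fderiv ℝ f) y :=
  ((contDiffAt_two_of_norm_lt_one hf hy).fderiv_right (m := 1) (by norm_num)).differentiableAt
    one_ne_zero

lemma norm_sub_le_C2norm_mul (hf : ContDiffOn ℝ 2 f (closedBall 0 1)) (hy : ‖y‖ < 1)
    (hz : ‖z‖ < 1) : ‖f z - f y‖ ≤ C2norm n f * ‖z - y‖ := by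
  refine (convex_ball (0 : Ep n) 1).norm_image_sub_le_of_norm_fderiv_le (𝕜 := ℝ)
    (fun x hx => ?_) (fun x hx => ?_) (mem_ball_zero_iff.2 hy) (mem_ball_zero_iff.2 hz)
  · exact (contDiffAt_two_of_norm_lt_one hf (mem_ball_zero_iff.1 hx)).differentiableAt two_ne_zero
  · exact norm_fderiv_le_C2norm hf (mem_ball_zero_iff.1 hx).le

lemma norm_fderiv_le_C2norm_mul_norm (hf : ContDiffOn ℝ 2 f (closedBall 0 1))
    (hf0 : fderiv ℝ f 0 = 0) (hy : ‖y‖ < 1) : ‖fderiv ℝ f y‖ ≤ C2norm n f * ‖y‖ := by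
  have h := (convex_ball (0 : Ep n) 1).norm_image_sub_le_of_norm_fderiv_le (𝕜 := ℝ)
    (f := fderiv ℝ f) (C := C2norm n f)
    (fun x hx => differentiableAt_fderiv_of_norm_lt_one hf (mem_ball_zero_iff.1 hx))
    (fun x hx => norm_fderiv_fderiv_le_C2norm hf (mem_ball_zero_iff.1 hx).le)
    (mem_ball_self one_pos) (mem_ball_zero_iff.2 hy)
  simpa only [hf0, sub_zero] using h

end C2norm

/-! ### Integration by parts for functions vanishing at the boundary -/

section Threshold

/-- The smooth bump function equal to `1` on `[-1, 1]` and supported in `[-2, 2]`. -/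
def thresholdBump : ContDiffBump (0 : ℝ) := ⟨1, 2, one_pos, one_lt_two⟩

/-- A smooth truncation at height `t` of the identity of `ℝ`: it vanishes on `[-t, t]` and is the
identity outside `[-2t, 2t]`. -/
def softThreshold (t s : ℝ) : ℝ := s * (1 - thresholdBump (s / t))

lemma contDiff_softThreshold (t : ℝ) : ContDiff ℝ 1 (softThreshold t) :=
  contDiff_id.mul (contDiff_const.sub
    (thresholdBump.contDiff.comp (contDiff_id.div_const t)))

variable {t s : ℝ}

lemma softThreshold_eq_zero (ht : 0 < t) (hs : |s| ≤ t) : softThreshold t s = 0 := by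
  have h : thresholdBump (s / t) = 1 := thresholdBump.one_of_mem_closedBall (by
    simpa [thresholdBump, abs_div, abs_of_pos ht] using (div_le_one ht).2 hs)
  rw [softThreshold, h, sub_self, mul_zero]

lemma softThreshold_eq_self (ht : 0 < t) (hs : 2 * t ≤ |s|) : softThreshold t s = s := by
  have h : thresholdBump (s / t) = 0 := thresholdBump.zero_of_le_dist (by
    simpa [thresholdBump, abs_div, abs_of_pos ht] using (le_div_iff₀ ht).2 hs)
  rw [softThreshold, h, sub_zero, mul_one]

lemma deriv_softThreshold_eq_one (ht : 0 < t) (hs : 2 * t < |s|) :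
    deriv (softThreshold t) s = 1 := by
  have h : softThreshold t =ᶠ[𝓝 s] id := by
    filter_upwards [(isOpen_lt continuous_const continuous_abs).mem_nhds hs] with r hr
    exact softThreshold_eq_self ht hr.le
  rw [h.deriv_eq, deriv_id]

lemma abs_softThreshold_le (t s : ℝ) : |softThreshold t s| ≤ |s| := by
  have h0 : 0 ≤ thresholdBump (s / t) := thresholdBump.nonneg
  have h1 : thresholdBump (s / t) ≤ 1 := thresholdBump.le_one
  rw [softThreshold, abs_mul]
  exact mul_le_of_le_one_right (abs_nonneg _) (abs_le.2 ⟨by linarith, by linarith⟩)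

lemma exists_abs_deriv_softThreshold_le :
    ∃ M, ∀ t > 0, ∀ s, |deriv (softThreshold t) s| ≤ M := by
  have hsmooth := contDiff_softThreshold 1
  have hdiff : ∀ r, DifferentiableAt ℝ (softThreshold 1) r :=
    hsmooth.differentiable one_ne_zero
  have hcpt : IsCompact (Set.Icc (-2 : ℝ) 2) := isCompact_Icc
  obtain ⟨M, hM⟩ := hcpt.exists_bound_of_continuousOn
    (hsmooth.continuous_deriv le_rfl).continuousOn
  refine ⟨max M 1, fun t ht s => ?_⟩
  have hscale : deriv (softThreshold t) s = deriv (softThreshold 1) (s / t) := by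
    have h : softThreshold t = fun r => t * softThreshold 1 (r / t) := by
      ext r
      simp only [softThreshold, div_one]
      field_simp
    have hcomp := ((hdiff (s / t)).hasDerivAt.comp s ((hasDerivAt_id s).div_const t)).const_mul t
    rw [h]
    refine hcomp.deriv.trans ?_
    field_simp
  rw [hscale]
  by_cases hr : |s / t| ≤ 2
  · exact (hM _ (abs_le.1 hr)).trans (le_max_left _ _)
  · rw [deriv_softThreshold_eq_one one_pos (by linarith [not_le.1 hr]), abs_one]
    exact le_max_right _ _

end Threshold

section IntegrationByParts

variable {X : Type*} [NormedAddCommGroup X] [NormedSpace ℝ X] {Ω K : Set X}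

section Pointwise

variable {f : X → ℝ}

lemma indicator_eventuallyEq_zero_of_notMem_compact {X : Type*} [TopologicalSpace X] [T2Space X]
    {Ω K : Set X} {f : X → ℝ} (hK : IsCompact K) (h0 : ∀ x ∈ Ω, x ∉ K → f x = 0) {x : X}
    (hx : x ∉ K) : Ω.indicator f =ᶠ[𝓝 x] 0 := by
  filter_upwards [hK.isClosed.isOpen_compl.mem_nhds hx] with y hy
  exact Set.indicator_apply_eq_zero.2 fun hyΩ => h0 y hyΩ hy

lemma contDiff_indicator_of_eq_zero_off_compact (hΩ : IsOpen Ω) (hK : IsCompact K) (hKΩ : K ⊆ Ω)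
    (hf : ContDiffOn ℝ 1 f Ω) (h0 : ∀ x ∈ Ω, x ∉ K → f x = 0) : ContDiff ℝ 1 (Ω.indicator f) := by
  refine contDiff_iff_contDiffAt.2 fun x => ?_
  by_cases hx : x ∈ Ω
  · exact (hf.contDiffAt (hΩ.mem_nhds hx)).congr_of_eventuallyEq
      (Set.eqOn_indicator.eventuallyEq_of_mem (hΩ.mem_nhds hx))
  · exact contDiffAt_const.congr_of_eventuallyEq
      (indicator_eventuallyEq_zero_of_notMem_compact hK h0 (mt (@hKΩ x) hx))

lemma fderiv_indicator_of_eq_zero_off_compact (hΩ : IsOpen Ω) (hK : IsCompact K) (hKΩ : K ⊆ Ω)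
    (h0 : ∀ x ∈ Ω, x ∉ K → f x = 0) :
    fderiv ℝ (Ω.indicator f) = Ω.indicator (fderiv ℝ f) := by
  ext1 x
  by_cases hx : x ∈ Ω
  · rw [(Set.eqOn_indicator.eventuallyEq_of_mem (hΩ.mem_nhds hx)).fderiv_eq,
      Set.indicator_of_mem hx]
  · rw [(indicator_eventuallyEq_zero_of_notMem_compact hK h0 (mt (@hKΩ x) hx)).fderiv_eq,
      Set.indicator_of_notMem hx, fderiv_zero, Pi.zero_apply]

lemma fderiv_softThreshold_comp_mul (t : ℝ) {w : X → ℝ} {x : X} (hw : DifferentiableAt ℝ w x)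
    (hf : DifferentiableAt ℝ f x) (v : X) :
    fderiv ℝ (fun y => softThreshold t (w y) * f y) x v =
      deriv (softThreshold t) (w x) * (fderiv ℝ w x v * f x) +
        softThreshold t (w x) * fderiv ℝ f x v := by
  have hcomp := ((contDiff_softThreshold t).differentiable one_ne_zero
    (w x)).hasDerivAt.comp_hasFDerivAt x hw.hasFDerivAt
  rw [HasFDerivAt.fderiv (f := fun y => softThreshold t (w y) * f y)
    (hcomp.mul hf.hasFDerivAt)]
  simp only [Function.comp_apply, add_apply, smul_apply,
    smul_eq_mul]
  ring

end Pointwise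

variable [FiniteDimensional ℝ X] [MeasurableSpace X] [BorelSpace X] (μ : Measure X)
  [μ.IsAddHaarMeasure]

lemma integral_fderiv_eq_zero_of_hasCompactSupport {f : X → ℝ} (hf : ContDiff ℝ 1 f)
    (hc : HasCompactSupport f) (v : X) : ∫ x, fderiv ℝ f x v ∂μ = 0 := by
  have hcont : Continuous fun x => fderiv ℝ f x v :=
    (hf.continuous_fderiv one_ne_zero).clm_apply continuous_const
  have hInt := hcont.integrable_of_hasCompactSupport (μ := μ) (hc.fderiv_apply ℝ v)
  simpa using integral_mul_fderiv_eq_neg_fderiv_mul_of_integrable (μ := μ) (v := v)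
    (f := fun _ : X => (1 : ℝ)) (g := f) (by simp) (by simpa using hInt)
    (by simpa using hf.continuous.integrable_of_hasCompactSupport hc)
    (fun x _ => by fun_prop) (fun x _ => hf.differentiable one_ne_zero x)

lemma setIntegral_fderiv_eq_zero_of_eq_zero_off_compact (hΩ : IsOpen Ω) (hK : IsCompact K)
    (hKΩ : K ⊆ Ω) {f : X → ℝ} (hf : ContDiffOn ℝ 1 f Ω) (h0 : ∀ x ∈ Ω, x ∉ K → f x = 0) (v : X) :
    IntegrableOn (fun x => fderiv ℝ f x v) Ω μ ∧ ∫ x in Ω, fderiv ℝ f x v ∂μ = 0 := by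
  have hsmooth := contDiff_indicator_of_eq_zero_off_compact hΩ hK hKΩ hf h0
  have hsupp : HasCompactSupport (Ω.indicator f) := HasCompactSupport.intro hK fun x hx =>
    (indicator_eventuallyEq_zero_of_notMem_compact hK h0 hx).eq_of_nhds
  have hfderiv : (fun x => fderiv ℝ (Ω.indicator f) x v) =
      Ω.indicator fun x => fderiv ℝ f x v := by
    ext x
    rw [fderiv_indicator_of_eq_zero_off_compact hΩ hK hKΩ h0]
    by_cases hx : x ∈ Ω <;> simp [hx]
  rw [← integrable_indicator_iff hΩ.measurableSet, ← integral_indicator hΩ.measurableSet,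
    ← hfderiv]
  exact ⟨((hsmooth.continuous_fderiv one_ne_zero).clm_apply
      continuous_const).integrable_of_hasCompactSupport (hsupp.fderiv_apply ℝ v),
    integral_fderiv_eq_zero_of_hasCompactSupport μ hsmooth hsupp v⟩

/- `x ↦ w x • e` is constant on the zero set of `w`, so at almost every point of that set, namely
at its density points, its derivative vanishes. -/
lemma ae_fderiv_eq_zero_of_eq_zero (hΩ : IsOpen Ω) {w : X → ℝ} (hw : DifferentiableOn ℝ w Ω) :
    ∀ᵐ x ∂μ.restrict Ω, w x = 0 → fderiv ℝ w x = 0 := by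
  rcases subsingleton_or_nontrivial X with hX | hX
  · exact Eventually.of_forall fun x _ => Subsingleton.elim _ _
  obtain ⟨e, he⟩ := exists_ne (0 : X)
  have hsm : MeasurableSet (Ω ∩ w ⁻¹' {0}) := by
    rw [← Set.sdiff_compl, ← Set.sdiff_self_inter, ← Set.preimage_compl]
    exact hΩ.measurableSet.diff
      (hw.continuousOn.isOpen_inter_preimage hΩ isOpen_compl_singleton).measurableSet
  have happrox : ApproximatesLinearOn (fun x => w x • e) (0 : X →L[ℝ] X) (Ω ∩ w ⁻¹' {0}) 0 := by
    rintro x ⟨-, hx : w x = 0⟩ y ⟨-, hy : w y = 0⟩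
    simp [hx, hy]
  have hzero := happrox.norm_fderiv_sub_le μ hsm (fun x => (fderiv ℝ w x).smulRight e) fun x hx =>
    ((hw.differentiableAt (hΩ.mem_nhds hx.1)).hasFDerivAt.smul_const e).hasFDerivWithinAt
  rw [ae_restrict_iff' hsm] at hzero
  rw [ae_restrict_iff' hΩ.measurableSet]
  filter_upwards [hzero] with x hx hxΩ hx0
  have hx' : (fderiv ℝ w x).smulRight e = 0 := by
    simpa only [sub_zero, nonpos_iff_eq_zero, nnnorm_eq_zero] using hx ⟨hxΩ, hx0⟩
  ext v
  simpa [he] using DFunLike.congr_fun hx' v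

variable {ι : Type*} [Fintype ι] (d : ι → X) {w : X → ℝ} {V : ι → X → ℝ}

lemma setIntegral_softThreshold_divergence_eq_zero (hΩ : IsOpen Ω) (hw : ContDiffOn ℝ 1 w Ω)
    (hV : ∀ i, ContDiffOn ℝ 1 (V i) Ω) {t : ℝ} (ht : 0 < t) (hK : IsCompact K) (hKΩ : K ⊆ Ω)
    (hwK : ∀ x ∈ Ω, ∀ i, V i x ≠ 0 → t ≤ |w x| → x ∈ K) :
    ∫ x in Ω, (deriv (softThreshold t) (w x) * ∑ i, fderiv ℝ w x (d i) * V i x +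
      softThreshold t (w x) * ∑ i, fderiv ℝ (V i) x (d i)) ∂μ = 0 := by
  have hdiff {f : X → ℝ} (hf : ContDiffOn ℝ 1 f Ω) {x : X} (hx : x ∈ Ω) : DifferentiableAt ℝ f x :=
    (hf.differentiableOn one_ne_zero).differentiableAt (hΩ.mem_nhds hx)
  have hsmooth (i : ι) : ContDiffOn ℝ 1 (fun x => softThreshold t (w x) * V i x) Ω :=
    ((contDiff_softThreshold t).comp_contDiffOn hw).mul (hV i)
  have hzero (i : ι) : ∀ x ∈ Ω, x ∉ K → softThreshold t (w x) * V i x = 0 := by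
    intro x hx hxK
    by_cases hVx : V i x = 0
    · rw [hVx, mul_zero]
    · rw [softThreshold_eq_zero ht (not_le.1 fun h => hxK (hwK x hx i hVx h)).le, zero_mul]
  have hparts := fun i => setIntegral_fderiv_eq_zero_of_eq_zero_off_compact μ hΩ hK hKΩ
    (hsmooth i) (hzero i) (d i)
  calc _ = ∫ x in Ω, ∑ i, fderiv ℝ (fun y => softThreshold t (w y) * V i y) x (d i) ∂μ := by
        refine setIntegral_congr_fun hΩ.measurableSet fun x hx => ?_
        simp only [fderiv_softThreshold_comp_mul t (hdiff hw hx) (hdiff (hV _) hx),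
          Finset.sum_add_distrib, Finset.mul_sum]
    _ = 0 := by
        rw [integral_finsetSum _ fun i _ => (hparts i).1]
        exact Finset.sum_eq_zero fun i _ => (hparts i).2

lemma tendsto_deriv_softThreshold_mul_add {s p q : ℝ} (hsp : s = 0 → p = 0) {τ : ℕ → ℝ}
    (hτ : ∀ k, 0 < τ k) (hτ0 : Tendsto τ atTop (𝓝 0)) :
    Tendsto (fun k => deriv (softThreshold (τ k)) s * p + softThreshold (τ k) s * q) atTop
      (𝓝 (p + s * q)) := by
  refine tendsto_const_nhds.congr' ?_
  rcases eq_or_ne s 0 with rfl | hs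
  · simp [hsp rfl, softThreshold]
  · filter_upwards [hτ0.eventually_lt_const (by positivity : 0 < |s| / 2)] with k hk
    rw [deriv_softThreshold_eq_one (hτ k) (by linarith),
      softThreshold_eq_self (hτ k) (by linarith), one_mul]

/- Nothing is assumed about `∇w` near the boundary: `w` is replaced by `softThreshold t w`, which
vanishes where `|w| ≤ t`, and `t` tends to `0`. -/
theorem setIntegral_fderiv_mul_add_mul_divergence_eq_zero (hΩ : IsOpen Ω)
    (hw : ContDiffOn ℝ 1 w Ω) (hV : ∀ i, ContDiffOn ℝ 1 (V i) Ω)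
    (hwV : ∀ t > 0, ∃ K, IsCompact K ∧ K ⊆ Ω ∧ ∀ x ∈ Ω, ∀ i, V i x ≠ 0 → t ≤ |w x| → x ∈ K)
    (hInt : IntegrableOn (fun x => ∑ i, fderiv ℝ w x (d i) * V i x) Ω μ)
    (hInt' : IntegrableOn (fun x => w x * ∑ i, fderiv ℝ (V i) x (d i)) Ω μ) :
    ∫ x in Ω, ((∑ i, fderiv ℝ w x (d i) * V i x) + w x * ∑ i, fderiv ℝ (V i) x (d i)) ∂μ = 0 := by
  obtain ⟨M, hM⟩ := exists_abs_deriv_softThreshold_le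
  have hcont {f : X → ℝ} (hf : ContDiffOn ℝ 1 f Ω) (v : X) :
      ContinuousOn (fun x => fderiv ℝ f x v) Ω :=
    (hf.continuousOn_fderiv_of_isOpen hΩ le_rfl).clm_apply continuousOn_const
  let τ : ℕ → ℝ := fun k => 1 / ((k : ℝ) + 1)
  have hτ : ∀ k, 0 < τ k := fun k => by positivity
  have hlim := tendsto_integral_of_dominated_convergence (μ := μ.restrict Ω)
    (F := fun k x => deriv (softThreshold (τ k)) (w x) * ∑ i, fderiv ℝ w x (d i) * V i x +
      softThreshold (τ k) (w x) * ∑ i, fderiv ℝ (V i) x (d i))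
    (fun x => M * |∑ i, fderiv ℝ w x (d i) * V i x| + |w x * ∑ i, fderiv ℝ (V i) x (d i)|)
    (fun k => ContinuousOn.aestronglyMeasurable (ContinuousOn.add
      ((((contDiff_softThreshold _).continuous_deriv le_rfl).comp_continuousOn hw.continuousOn).mul
        (continuousOn_finsetSum _ fun i _ => (hcont hw _).mul (hV i).continuousOn))
      (((contDiff_softThreshold _).continuous.comp_continuousOn hw.continuousOn).mul
        (continuousOn_finsetSum _ fun i _ => hcont (hV i) _))) hΩ.measurableSet)
    ((hInt.abs.const_mul M).add hInt'.abs)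
    (fun k => Eventually.of_forall fun x => (abs_add_le _ _).trans (by
      rw [abs_mul, abs_mul (softThreshold _ _), abs_mul (w x)]
      exact add_le_add (mul_le_mul_of_nonneg_right (hM _ (hτ k) _) (abs_nonneg _))
        (mul_le_mul_of_nonneg_right (abs_softThreshold_le _ _) (abs_nonneg _))))
    (by
      filter_upwards [ae_fderiv_eq_zero_of_eq_zero μ hΩ (hw.differentiableOn one_ne_zero)] with x hx
      exact tendsto_deriv_softThreshold_mul_add (fun h => by simp [hx h]) hτ
        tendsto_one_div_add_atTop_nhds_zero_nat)
  refine tendsto_nhds_unique hlim (tendsto_const_nhds.congr fun k => ?_)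
  obtain ⟨K, hK, hKΩ, hwK⟩ := hwV (τ k) (hτ k)
  exact (setIntegral_softThreshold_divergence_eq_zero μ d hΩ hw hV (hτ k) hK hKΩ hwK).symm

end IntegrationByParts

/-! ### Coordinate directions -/

section Directions

variable {n : ℕ}

lemma sum_dir {M : Type*} [AddCommMonoid M] (hn : 0 < n) (g : Efull n → M) :
    ∑ α, g (dir n α) = (∑ i, g (tang n i)) + g (vert n) := by
  obtain ⟨m, rfl⟩ : ∃ m, n = m + 1 := ⟨n - 1, by omega⟩
  rw [Fin.sum_univ_castSucc]
  have htang (i : Fin m) : dir (m + 1) i.castSucc = tang (m + 1) i := by simp [dir, tang]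
  have hvert : dir (m + 1) (Fin.last m) = vert (m + 1) := by simp [dir, vert]
  simp only [htang, hvert, Nat.add_one_sub_one]

lemma dir_horizontal_or_eq_vert (α : Fin n) :
    (‖(dir n α).1‖ = 1 ∧ (dir n α).2 = 0) ∨ dir n α = vert n := by
  unfold dir vert
  split_ifs <;> simp

lemma norm_dir_le_one (α : Fin n) : ‖dir n α‖ ≤ 1 := by
  rcases dir_horizontal_or_eq_vert α with ⟨hfst, hsnd⟩ | h
  · simp [Prod.norm_def, hfst, hsnd]
  · simp [h, vert, Prod.norm_def]

lemma eq_sum_tang_add_vert (x : Efull n) : x = (∑ i, x.1 i • tang n i) + x.2 • vert n := by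
  ext j
  · simp [tang, vert, Finset.sum_apply, Prod.fst_sum, Pi.single_apply]
  · simp [tang, vert, Prod.snd_sum]

lemma norm_le_sum_abs_dir (hn : 0 < n) (L : Efull n →L[ℝ] ℝ) : ‖L‖ ≤ ∑ α, |L (dir n α)| := by
  refine L.opNorm_le_bound (Finset.sum_nonneg fun _ _ => abs_nonneg _) fun x => ?_
  have hL : L x = (∑ i, x.1 i * L (tang n i)) + x.2 * L (vert n) := by
    conv_lhs => rw [eq_sum_tang_add_vert x]
    simp
  rw [hL, sum_dir hn fun v => |L v|, Real.norm_eq_abs, add_mul, Finset.sum_mul]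
  refine (abs_add_le _ _).trans (add_le_add ((Finset.abs_sum_le_sum_abs _ _).trans
    (Finset.sum_le_sum fun i _ => ?_)) ?_)
  · rw [abs_mul, mul_comm]
    exact mul_le_mul_of_nonneg_left ((PiLp.norm_apply_le x.1 i).trans (norm_fst_le x))
      (abs_nonneg _)
  · rw [abs_mul, mul_comm]
    exact mul_le_mul_of_nonneg_left (norm_snd_le x) (abs_nonneg _)

/- `Efull n` carries the maximum of the norms of its two factors, so the norm of a functional is
only comparable with its Euclidean length. -/
lemma norm_sq_le_sum_dir_sq (hn : 0 < n) (L : Efull n →L[ℝ] ℝ) :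
    ‖L‖ ^ 2 ≤ n * ∑ α, L (dir n α) ^ 2 := by
  calc ‖L‖ ^ 2 ≤ (∑ α, |L (dir n α)|) ^ 2 := by gcongr; exact norm_le_sum_abs_dir hn L
    _ ≤ (Finset.univ : Finset (Fin n)).card * ∑ α, |L (dir n α)| ^ 2 := sq_sum_le_card_mul_sum_sq
    _ = _ := by simp

end Directions

/-! ### The region between two graphs -/

/-- The vertical distance `δ(y) = ε + h₁(y) - h₂(y)` between the top and the bottom boundary. -/
def gap {E : Type*} (ε : ℝ) (h1 h2 : E → ℝ) (y : E) : ℝ := ε + h1 y - h2 y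

/-- The two boundary graphs are `C²` up to the boundary of the unit ball and do not touch there. -/
structure SmoothGap (n : ℕ) (ε : ℝ) (h1 h2 : Ep n → ℝ) : Prop where
  smooth_top : ContDiffOn ℝ 2 h1 (closedBall 0 1)
  smooth_bot : ContDiffOn ℝ 2 h2 (closedBall 0 1)
  gap_pos : ∀ y : Ep n, ‖y‖ ≤ 1 → 0 < gap ε h1 h2 y

section Region

variable {n : ℕ} {ε r : ℝ} {h1 h2 : Ep n → ℝ}

lemma isOpen_Omega (hh1 : ContinuousOn h1 (closedBall 0 1))
    (hh2 : ContinuousOn h2 (closedBall 0 1)) (hr : r ≤ 1) : IsOpen (Omega n ε h1 h2 r) := by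
  have hU : IsOpen {x : Efull n | ‖x.1‖ < r} := isOpen_lt (by fun_prop) continuous_const
  have hmaps : Set.MapsTo Prod.fst {x : Efull n | ‖x.1‖ < r} (closedBall (0 : Ep n) 1) :=
    fun x (hx : ‖x.1‖ < r) => mem_closedBall_zero_iff.2 (hx.le.trans hr)
  have htop : ContinuousOn (fun x : Efull n => ε / 2 + h1 x.1 - x.2) {x | ‖x.1‖ < r} :=
    (continuousOn_const.add (hh1.comp continuousOn_fst hmaps)).sub continuousOn_snd
  have hbot : ContinuousOn (fun x : Efull n => x.2 - (-ε / 2 + h2 x.1)) {x | ‖x.1‖ < r} :=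
    continuousOn_snd.sub (continuousOn_const.add (hh2.comp continuousOn_fst hmaps))
  convert (hbot.isOpen_inter_preimage hU (isOpen_Ioi (a := 0))).inter
    (htop.isOpen_inter_preimage hU (isOpen_Ioi (a := 0))) using 1
  ext x
  simp only [Omega, Set.mem_ofPred_eq, Set.mem_inter_iff, Set.mem_preimage, Set.mem_Ioi, sub_pos]
  tauto

lemma ubar_nonneg {x : Efull n} (hx : x ∈ Omega n ε h1 h2 r) : 0 ≤ ubar n ε h1 h2 x := by
  obtain ⟨-, hbot, htop⟩ := hx
  exact div_nonneg (by linarith) (by linarith)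

lemma ubar_le_one {x : Efull n} (hx : x ∈ Omega n ε h1 h2 r) : ubar n ε h1 h2 x ≤ 1 := by
  obtain ⟨-, hbot, htop⟩ := hx
  exact div_le_one_of_le₀ (by linarith) (by linarith)

lemma contDiffOn_comp_fst {f : Ep n → ℝ} (hf : ContDiffOn ℝ 2 f (closedBall 0 1))
    {S : Set (Efull n)} (hS : ∀ x ∈ S, ‖x.1‖ ≤ 1) : ContDiffOn ℝ 2 (fun x : Efull n => f x.1) S :=
  hf.comp contDiff_fst.contDiffOn fun x hx => by simpa using hS x hx

namespace SmoothGap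

variable (hg : SmoothGap n ε h1 h2)
include hg

lemma isOpen_Omega : IsOpen (Omega n ε h1 h2 1) :=
  _root_.isOpen_Omega hg.smooth_top.continuousOn hg.smooth_bot.continuousOn le_rfl

lemma contDiffOn_gap {S : Set (Efull n)} (hS : ∀ x ∈ S, ‖x.1‖ ≤ 1) :
    ContDiffOn ℝ 2 (fun x : Efull n => gap ε h1 h2 x.1) S :=
  (contDiffOn_const.add (contDiffOn_comp_fst hg.smooth_top hS)).sub
    (contDiffOn_comp_fst hg.smooth_bot hS)

lemma contDiffOn_ubar {S : Set (Efull n)} (hS : ∀ x ∈ S, ‖x.1‖ ≤ 1) :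
    ContDiffOn ℝ 2 (ubar n ε h1 h2) S :=
  ((contDiff_snd.contDiffOn.sub (contDiffOn_comp_fst hg.smooth_bot hS)).add contDiffOn_const).div
    (hg.contDiffOn_gap hS) fun x hx => (hg.gap_pos _ (hS x hx)).ne'

lemma contDiffOn_util {φ ψ : Ep n → ℝ} (hφ : ContDiffOn ℝ 2 φ (closedBall 0 1))
    (hψ : ContDiffOn ℝ 2 ψ (closedBall 0 1)) {S : Set (Efull n)} (hS : ∀ x ∈ S, ‖x.1‖ ≤ 1) :
    ContDiffOn ℝ 2 (util n ε h1 h2 φ ψ) S :=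
  ((contDiffOn_comp_fst hφ hS).mul (hg.contDiffOn_ubar hS)).add
    ((contDiffOn_comp_fst hψ hS).mul (contDiffOn_const.sub (hg.contDiffOn_ubar hS)))

end SmoothGap

end Region

/-! ### Derivatives of the interpolating function -/

section DirectionalDerivatives

variable {n : ℕ}

/-- The derivative of `ū` in the direction `v`. -/
def ubarD (ε : ℝ) (h1 h2 : Ep n → ℝ) (v x : Efull n) : ℝ :=
  (v.2 - (fderiv ℝ h1 x.1 v.1 * ubar n ε h1 h2 x +
    fderiv ℝ h2 x.1 v.1 * (1 - ubar n ε h1 h2 x))) / gap ε h1 h2 x.1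

/-- The second derivative of `ū` in the direction `v`. -/
def ubarDD (ε : ℝ) (h1 h2 : Ep n → ℝ) (v x : Efull n) : ℝ :=
  -(fderiv ℝ (fderiv ℝ h1) x.1 v.1 v.1 * ubar n ε h1 h2 x +
    fderiv ℝ (fderiv ℝ h2) x.1 v.1 v.1 * (1 - ubar n ε h1 h2 x) +
    2 * ((fderiv ℝ h1 x.1 v.1 - fderiv ℝ h2 x.1 v.1) * ubarD ε h1 h2 v x)) / gap ε h1 h2 x.1

/-- The derivative of `ũ` in the direction `v`. -/
def utilD (ε : ℝ) (h1 h2 φ ψ : Ep n → ℝ) (v x : Efull n) : ℝ :=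
  fderiv ℝ φ x.1 v.1 * ubar n ε h1 h2 x + fderiv ℝ ψ x.1 v.1 * (1 - ubar n ε h1 h2 x) +
    (φ x.1 - ψ x.1) * ubarD ε h1 h2 v x

/-- The second derivative of `ũ` in the direction `v`. -/
def utilDD (ε : ℝ) (h1 h2 φ ψ : Ep n → ℝ) (v x : Efull n) : ℝ :=
  fderiv ℝ (fderiv ℝ φ) x.1 v.1 v.1 * ubar n ε h1 h2 x +
    fderiv ℝ (fderiv ℝ ψ) x.1 v.1 v.1 * (1 - ubar n ε h1 h2 x) +
    2 * ((fderiv ℝ φ x.1 v.1 - fderiv ℝ ψ x.1 v.1) * ubarD ε h1 h2 v x) +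
    (φ x.1 - ψ x.1) * ubarDD ε h1 h2 v x

variable {ε : ℝ} {h1 h2 φ ψ : Ep n → ℝ} {x : Efull n} (v : Efull n)

lemma hasLineDerivAt_comp_fst {f : Ep n → ℝ} (hf : ContDiffOn ℝ 2 f (closedBall 0 1))
    (hx : ‖x.1‖ < 1) :
    HasLineDerivAt ℝ (fun y : Efull n => f y.1) (fderiv ℝ f x.1 v.1) x v :=
  (((contDiffAt_two_of_norm_lt_one hf hx).differentiableAt two_ne_zero).hasFDerivAt.comp x
    hasFDerivAt_fst).hasLineDerivAt v

lemma hasLineDerivAt_fderiv_comp_fst {f : Ep n → ℝ} (hf : ContDiffOn ℝ 2 f (closedBall 0 1))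
    (hx : ‖x.1‖ < 1) :
    HasLineDerivAt ℝ (fun y : Efull n => fderiv ℝ f y.1 v.1)
      (fderiv ℝ (fderiv ℝ f) x.1 v.1 v.1) x v := by
  simpa using (((differentiableAt_fderiv_of_norm_lt_one hf hx).hasFDerivAt.comp x
    hasFDerivAt_fst).clm_apply (hasFDerivAt_const v.1 x)).hasLineDerivAt v

lemma hasLineDerivAt_snd : HasLineDerivAt ℝ (fun y : Efull n => y.2) v.2 x v :=
  (ContinuousLinearMap.snd ℝ (Ep n) ℝ).hasFDerivAt.hasLineDerivAt v

namespace SmoothGap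

variable (hg : SmoothGap n ε h1 h2)
include hg

lemma hasLineDerivAt_ubar (hx : ‖x.1‖ < 1) :
    HasLineDerivAt ℝ (ubar n ε h1 h2) (ubarD ε h1 h2 v x) x v := by
  have htop := hasLineDerivAt_comp_fst v hg.smooth_top hx
  have hbot := hasLineDerivAt_comp_fst v hg.smooth_bot hx
  have hpos : 0 < ε + h1 x.1 - h2 x.1 := hg.gap_pos _ hx.le
  have h := HasDerivAt.div (((hasLineDerivAt_snd (x := x) v).sub hbot).add_const (ε / 2))
    ((htop.const_add ε).sub hbot) (by simpa using hpos.ne')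
  refine h.congr_deriv ?_
  simp only [zero_smul, add_zero, Pi.sub_apply, ubarD, ubar, gap]
  field_simp
  ring

lemma hasLineDerivAt_ubarD (hx : ‖x.1‖ < 1) :
    HasLineDerivAt ℝ (ubarD ε h1 h2 v) (ubarDD ε h1 h2 v x) x v := by
  have htop := hasLineDerivAt_comp_fst v hg.smooth_top hx
  have hbot := hasLineDerivAt_comp_fst v hg.smooth_bot hx
  have htop' := hasLineDerivAt_fderiv_comp_fst v hg.smooth_top hx
  have hbot' := hasLineDerivAt_fderiv_comp_fst v hg.smooth_bot hx
  have hubar := hg.hasLineDerivAt_ubar v hx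
  have hpos : 0 < gap ε h1 h2 x.1 := hg.gap_pos _ hx.le
  have h := HasDerivAt.div
    (((HasDerivAt.mul htop' hubar).add (HasDerivAt.mul hbot' (hubar.const_sub 1))).const_sub v.2)
    ((htop.const_add ε).sub hbot) (by simpa [gap] using hpos.ne')
  refine h.congr_deriv ?_
  have hnum : v.2 - (fderiv ℝ h1 x.1 v.1 * ubar n ε h1 h2 x +
      fderiv ℝ h2 x.1 v.1 * (1 - ubar n ε h1 h2 x)) = ubarD ε h1 h2 v x * gap ε h1 h2 x.1 := by
    rw [ubarD, div_mul_cancel₀ _ hpos.ne']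
  simp only [zero_smul, add_zero, ubarDD, Pi.sub_apply, Pi.add_apply, Pi.mul_apply, hnum]
  rw [← gap]
  field_simp
  ring

variable (hφ : ContDiffOn ℝ 2 φ (closedBall 0 1)) (hψ : ContDiffOn ℝ 2 ψ (closedBall 0 1))
include hφ hψ

lemma hasLineDerivAt_util (hx : ‖x.1‖ < 1) :
    HasLineDerivAt ℝ (util n ε h1 h2 φ ψ) (utilD ε h1 h2 φ ψ v x) x v := by
  have hubar := hg.hasLineDerivAt_ubar v hx
  refine (HasDerivAt.add (HasDerivAt.mul (hasLineDerivAt_comp_fst v hφ hx) hubar)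
    (HasDerivAt.mul (hasLineDerivAt_comp_fst v hψ hx) (hubar.const_sub 1))).congr_deriv ?_
  simp only [zero_smul, add_zero, utilD]
  ring

lemma hasLineDerivAt_utilD (hx : ‖x.1‖ < 1) :
    HasLineDerivAt ℝ (utilD ε h1 h2 φ ψ v) (utilDD ε h1 h2 φ ψ v x) x v := by
  have hubar := hg.hasLineDerivAt_ubar v hx
  refine (HasDerivAt.add (HasDerivAt.add
    (HasDerivAt.mul (hasLineDerivAt_fderiv_comp_fst v hφ hx) hubar)
    (HasDerivAt.mul (hasLineDerivAt_fderiv_comp_fst v hψ hx) (hubar.const_sub 1)))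
    (HasDerivAt.mul
      ((hasLineDerivAt_comp_fst v hφ hx).sub (hasLineDerivAt_comp_fst v hψ hx))
      (hg.hasLineDerivAt_ubarD v hx))).congr_deriv ?_
  simp only [zero_smul, add_zero, utilDD, Pi.sub_apply]
  ring

lemma contDiffAt_util (hx : x ∈ Omega n ε h1 h2 1) : ContDiffAt ℝ 2 (util n ε h1 h2 φ ψ) x :=
  (hg.contDiffOn_util hφ hψ fun _ hy => hy.1.le).contDiffAt (hg.isOpen_Omega.mem_nhds hx)

lemma fderiv_util (hx : x ∈ Omega n ε h1 h2 1) :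
    fderiv ℝ (util n ε h1 h2 φ ψ) x v = utilD ε h1 h2 φ ψ v x :=
  ((((hg.contDiffAt_util hφ hψ hx).differentiableAt two_ne_zero).hasFDerivAt).hasLineDerivAt
    v).unique (hg.hasLineDerivAt_util v hφ hψ hx.1)

lemma fderiv_fderiv_util (hx : x ∈ Omega n ε h1 h2 1) :
    fderiv ℝ (fun y => fderiv ℝ (util n ε h1 h2 φ ψ) y v) x v = utilDD ε h1 h2 φ ψ v x := by
  have hd : DifferentiableAt ℝ (fun y => fderiv ℝ (util n ε h1 h2 φ ψ) y v) x :=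
    (((hg.contDiffAt_util hφ hψ hx).fderiv_right (m := 1) (by norm_num)).differentiableAt
      one_ne_zero).clm_apply (differentiableAt_const v)
  have heq : (fun y => fderiv ℝ (util n ε h1 h2 φ ψ) y v) =ᶠ[𝓝 x] utilD ε h1 h2 φ ψ v := by
    filter_upwards [hg.isOpen_Omega.mem_nhds hx] with y hy
    exact hg.fderiv_util v hφ hψ hy
  exact (hd.hasFDerivAt.hasLineDerivAt v).unique
    ((hg.hasLineDerivAt_utilD v hφ hψ hx.1).congr_of_eventuallyEq heq)

end SmoothGap

end DirectionalDerivatives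

/-! ### Size of the derivatives of the interpolating function -/

lemma abs_mul_add_mul_one_sub_le {a b q : ℝ} (hq0 : 0 ≤ q) (hq1 : q ≤ 1) :
    |a * q + b * (1 - q)| ≤ |a| + |b| := by
  refine (abs_add_le _ _).trans (add_le_add ?_ ?_) <;> rw [abs_mul]
  · exact mul_le_of_le_one_right (abs_nonneg a) (abs_le.2 ⟨by linarith, hq1⟩)
  · exact mul_le_of_le_one_right (abs_nonneg b) (abs_le.2 ⟨by linarith, by linarith⟩)

/-- The graphs `ε/2 + h₁` and `-ε/2 + h₂` are `C²`, flat at the origin, and bound a region whose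
width is comparable with `ε + |y|²`; `κ` and `C₀` are the quantitative constants. -/
structure NarrowGap (n : ℕ) (ε κ C₀ : ℝ) (h1 h2 : Ep n → ℝ) : Prop where
  eps_pos : 0 < ε
  one_le_const : 1 ≤ C₀
  smooth_top : ContDiffOn ℝ 2 h1 (closedBall 0 1)
  smooth_bot : ContDiffOn ℝ 2 h2 (closedBall 0 1)
  flat_top : fderiv ℝ h1 0 = 0
  flat_bot : fderiv ℝ h2 0 = 0
  C2norm_le : C2norm n h1 + C2norm n h2 ≤ κ
  deltaComp : DeltaComp n ε C₀ h1 h2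

namespace NarrowGap

variable {n : ℕ} {ε κ C₀ : ℝ} {h1 h2 : Ep n → ℝ} (hg : NarrowGap n ε κ C₀ h1 h2)
include hg

lemma const_pos : 0 < C₀ := one_pos.trans_le hg.one_le_const

lemma kappa_nonneg : 0 ≤ κ :=
  (add_nonneg (C2norm_nonneg h1) (C2norm_nonneg h2)).trans hg.C2norm_le

lemma le_gap {y : Ep n} (hy : ‖y‖ ≤ 1) : ε + ‖y‖ ^ 2 ≤ C₀ * gap ε h1 h2 y :=
  (div_le_iff₀' hg.const_pos).1 (hg.deltaComp y hy).1

lemma gap_le {y : Ep n} (hy : ‖y‖ ≤ 1) : gap ε h1 h2 y ≤ C₀ * (ε + ‖y‖ ^ 2) :=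
  (hg.deltaComp y hy).2

lemma eps_div_le_gap {y : Ep n} (hy : ‖y‖ ≤ 1) : ε / C₀ ≤ gap ε h1 h2 y :=
  (div_le_iff₀' hg.const_pos).2 ((le_add_of_nonneg_right (by positivity)).trans (hg.le_gap hy))

lemma gap_pos {y : Ep n} (hy : ‖y‖ ≤ 1) : 0 < gap ε h1 h2 y :=
  (div_pos hg.eps_pos hg.const_pos).trans_le (hg.eps_div_le_gap hy)

lemma smoothGap : SmoothGap n ε h1 h2 where
  smooth_top := hg.smooth_top
  smooth_bot := hg.smooth_bot
  gap_pos _ := hg.gap_pos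

lemma abs_fderiv_add_abs_fderiv_le {y v : Ep n} (hy : ‖y‖ < 1) (hv : ‖v‖ ≤ 1) :
    |fderiv ℝ h1 y v| + |fderiv ℝ h2 y v| ≤ κ * ‖y‖ := by
  have htop := (fderiv ℝ h1 y).le_of_opNorm_le_of_le
    (norm_fderiv_le_C2norm_mul_norm hg.smooth_top hg.flat_top hy) hv
  have hbot := (fderiv ℝ h2 y).le_of_opNorm_le_of_le
    (norm_fderiv_le_C2norm_mul_norm hg.smooth_bot hg.flat_bot hy) hv
  calc |fderiv ℝ h1 y v| + |fderiv ℝ h2 y v| ≤ (C2norm n h1 + C2norm n h2) * ‖y‖ := by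
        rw [Real.norm_eq_abs] at htop hbot
        linarith
    _ ≤ κ * ‖y‖ := by gcongr; exact hg.C2norm_le

lemma abs_fderiv_fderiv_add_le {y v : Ep n} (hy : ‖y‖ ≤ 1) (hv : ‖v‖ ≤ 1) :
    |fderiv ℝ (fderiv ℝ h1) y v v| + |fderiv ℝ (fderiv ℝ h2) y v v| ≤ κ := by
  have htop := ContinuousLinearMap.le_of_opNorm₂_le_of_le (fderiv ℝ (fderiv ℝ h1) y)
    (norm_fderiv_fderiv_le_C2norm hg.smooth_top hy) hv hv
  have hbot := ContinuousLinearMap.le_of_opNorm₂_le_of_le (fderiv ℝ (fderiv ℝ h2) y)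
    (norm_fderiv_fderiv_le_C2norm hg.smooth_bot hy) hv hv
  rw [Real.norm_eq_abs] at htop hbot
  linarith [hg.C2norm_le]

variable {x v : Efull n} (hx : x ∈ Omega n ε h1 h2 1) (hv : ‖v.1‖ ≤ 1)
include hx hv

lemma gap_mul_abs_ubarD_le :
    gap ε h1 h2 x.1 * |ubarD ε h1 h2 v x| ≤ |v.2| + κ * ‖x.1‖ := by
  have hpos := hg.gap_pos hx.1.le
  rw [ubarD, abs_div, abs_of_pos hpos, mul_div_cancel₀ _ hpos.ne']
  exact (abs_sub _ _).trans (add_le_add_right ((abs_mul_add_mul_one_sub_le (ubar_nonneg hx)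
    (ubar_le_one hx)).trans (hg.abs_fderiv_add_abs_fderiv_le hx.1 hv)) _)

/- The slopes of both graphs and `gap * ubarD` are `O(‖x.1‖)`, and `‖x.1‖ ^ 2` is at most
`C₀ * gap`. -/
lemma gap_mul_abs_ubarDD_le (hv2 : v.2 = 0) :
    gap ε h1 h2 x.1 * |ubarDD ε h1 h2 v x| ≤ κ + 2 * κ ^ 2 * C₀ := by
  have hpos := hg.gap_pos hx.1.le
  have hκ := hg.kappa_nonneg
  have hsecond := (abs_mul_add_mul_one_sub_le (ubar_nonneg hx) (ubar_le_one hx)).trans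
    (hg.abs_fderiv_fderiv_add_le hx.1.le hv)
  have hslope := (abs_sub _ _).trans (hg.abs_fderiv_add_abs_fderiv_le hx.1 hv)
  have hubarD := hg.gap_mul_abs_ubarD_le hx hv
  rw [hv2, abs_zero, zero_add] at hubarD
  have hcross : |(fderiv ℝ h1 x.1 v.1 - fderiv ℝ h2 x.1 v.1) * ubarD ε h1 h2 v x| ≤
      κ ^ 2 * C₀ := by
    rw [abs_mul]
    refine le_of_mul_le_mul_left ?_ hpos
    calc gap ε h1 h2 x.1 * (|fderiv ℝ h1 x.1 v.1 - fderiv ℝ h2 x.1 v.1| * |ubarD ε h1 h2 v x|)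
        = |fderiv ℝ h1 x.1 v.1 - fderiv ℝ h2 x.1 v.1| *
            (gap ε h1 h2 x.1 * |ubarD ε h1 h2 v x|) := by ring
      _ ≤ (κ * ‖x.1‖) * (κ * ‖x.1‖) := by gcongr
      _ = κ ^ 2 * ‖x.1‖ ^ 2 := by ring
      _ ≤ κ ^ 2 * (C₀ * gap ε h1 h2 x.1) := by
          gcongr
          linarith [hg.le_gap hx.1.le, hg.eps_pos]
      _ = gap ε h1 h2 x.1 * (κ ^ 2 * C₀) := by ring
  rw [ubarDD, abs_div, abs_neg, abs_of_pos hpos, mul_div_cancel₀ _ hpos.ne']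
  refine (abs_add_le _ _).trans (add_le_add hsecond ?_)
  rw [abs_mul, abs_two]
  linarith

end NarrowGap

section BoundaryData

variable {n : ℕ} {φ ψ : Ep n → ℝ} (hφ : ContDiffOn ℝ 2 φ (closedBall 0 1))
  (hψ : ContDiffOn ℝ 2 ψ (closedBall 0 1)) {y v : Ep n} (hy : ‖y‖ ≤ 1)
include hφ hψ hy

lemma abs_add_abs_le_C2norm_add : |φ y| + |ψ y| ≤ C2norm n φ + C2norm n ψ :=
  add_le_add (norm_le_C2norm hφ hy) (norm_le_C2norm hψ hy)

variable (hv : ‖v‖ ≤ 1)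
include hv

lemma abs_fderiv_add_abs_fderiv_le_C2norm_add :
    |fderiv ℝ φ y v| + |fderiv ℝ ψ y v| ≤ C2norm n φ + C2norm n ψ := by
  simpa using add_le_add
    ((fderiv ℝ φ y).le_of_opNorm_le_of_le (norm_fderiv_le_C2norm hφ hy) hv)
    ((fderiv ℝ ψ y).le_of_opNorm_le_of_le (norm_fderiv_le_C2norm hψ hy) hv)

lemma abs_fderiv_fderiv_add_le_C2norm_add :
    |fderiv ℝ (fderiv ℝ φ) y v v| + |fderiv ℝ (fderiv ℝ ψ) y v v| ≤
      C2norm n φ + C2norm n ψ := by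
  simpa using add_le_add
    (ContinuousLinearMap.le_of_opNorm₂_le_of_le (fderiv ℝ (fderiv ℝ φ) y)
      (norm_fderiv_fderiv_le_C2norm hφ hy) hv hv)
    (ContinuousLinearMap.le_of_opNorm₂_le_of_le (fderiv ℝ (fderiv ℝ ψ) y)
      (norm_fderiv_fderiv_le_C2norm hψ hy) hv hv)

end BoundaryData

namespace NarrowGap

variable {n : ℕ} {ε κ C₀ : ℝ} {h1 h2 φ ψ : Ep n → ℝ} (hg : NarrowGap n ε κ C₀ h1 h2)
  (hφ : ContDiffOn ℝ 2 φ (closedBall 0 1)) (hψ : ContDiffOn ℝ 2 ψ (closedBall 0 1))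
  {x v : Efull n} (hx : x ∈ Omega n ε h1 h2 1)
include hg hφ hψ hx

lemma abs_utilD_le (hv : ‖v‖ ≤ 1) :
    |utilD ε h1 h2 φ ψ v x| ≤
      (C2norm n φ + C2norm n ψ) * (1 + (1 + κ) / (ε / C₀)) := by
  have hv1 := (norm_fst_le v).trans hv
  have hpos := hg.gap_pos hx.1.le
  have hκ := hg.kappa_nonneg
  have hderiv := (abs_mul_add_mul_one_sub_le (ubar_nonneg hx) (ubar_le_one hx)).trans
    (abs_fderiv_add_abs_fderiv_le_C2norm_add hφ hψ hx.1.le hv1)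
  have hdiff := (abs_sub _ _).trans (abs_add_abs_le_C2norm_add hφ hψ hx.1.le)
  have hubarD : |ubarD ε h1 h2 v x| ≤ (1 + κ) / (ε / C₀) := by
    calc |ubarD ε h1 h2 v x| ≤ (|v.2| + κ * ‖x.1‖) / gap ε h1 h2 x.1 :=
          (le_div_iff₀' hpos).2 (hg.gap_mul_abs_ubarD_le hx hv1)
      _ ≤ (1 + κ) / (ε / C₀) := by
          gcongr
          · exact div_pos hg.eps_pos hg.const_pos
          · exact (norm_snd_le v).trans hv
          · exact mul_le_of_le_one_right hκ hx.1.le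
          · exact hg.eps_div_le_gap hx.1.le
  calc |utilD ε h1 h2 φ ψ v x| ≤ (C2norm n φ + C2norm n ψ) +
        (C2norm n φ + C2norm n ψ) * ((1 + κ) / (ε / C₀)) := by
        refine (abs_add_le _ _).trans (add_le_add hderiv ?_)
        rw [abs_mul]
        exact mul_le_mul hdiff hubarD (abs_nonneg _) ((abs_nonneg _).trans hdiff)
    _ = _ := by ring

lemma gap_mul_abs_utilDD_le (hv : ‖v.1‖ ≤ 1) (hv2 : v.2 = 0) :
    gap ε h1 h2 x.1 * |utilDD ε h1 h2 φ ψ v x| ≤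
      (C2norm n φ + C2norm n ψ) * (gap ε h1 h2 x.1 + 2 * κ * ‖x.1‖) +
        |φ x.1 - ψ x.1| * (κ + 2 * κ ^ 2 * C₀) := by
  have hpos := hg.gap_pos hx.1.le
  have hM := (abs_mul_add_mul_one_sub_le (ubar_nonneg hx) (ubar_le_one hx)).trans
    (abs_fderiv_fderiv_add_le_C2norm_add hφ hψ hx.1.le hv)
  have hslope := (abs_sub _ _).trans (abs_fderiv_add_abs_fderiv_le_C2norm_add hφ hψ hx.1.le hv)
  have hubarD := hg.gap_mul_abs_ubarD_le hx hv
  rw [hv2, abs_zero, zero_add] at hubarD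
  have hubarDD := hg.gap_mul_abs_ubarDD_le hx hv hv2
  have htriangle : |utilDD ε h1 h2 φ ψ v x| ≤ (C2norm n φ + C2norm n ψ) +
      2 * ((C2norm n φ + C2norm n ψ) * |ubarD ε h1 h2 v x|) +
      |φ x.1 - ψ x.1| * |ubarDD ε h1 h2 v x| := by
    refine (abs_add_three _ _ _).trans (add_le_add_three hM ?_ (abs_mul _ _).le)
    rw [abs_mul, abs_mul, abs_two]
    gcongr
  have hM0 := add_nonneg (C2norm_nonneg φ) (C2norm_nonneg ψ)
  calc gap ε h1 h2 x.1 * |utilDD ε h1 h2 φ ψ v x|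
      ≤ gap ε h1 h2 x.1 * ((C2norm n φ + C2norm n ψ) +
          2 * ((C2norm n φ + C2norm n ψ) * |ubarD ε h1 h2 v x|) +
          |φ x.1 - ψ x.1| * |ubarDD ε h1 h2 v x|) := by gcongr
    _ = (C2norm n φ + C2norm n ψ) * (gap ε h1 h2 x.1 +
          2 * (gap ε h1 h2 x.1 * |ubarD ε h1 h2 v x|)) +
          |φ x.1 - ψ x.1| * (gap ε h1 h2 x.1 * |ubarDD ε h1 h2 v x|) := by ring
    _ ≤ (C2norm n φ + C2norm n ψ) * (gap ε h1 h2 x.1 + 2 * (κ * ‖x.1‖)) +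
          |φ x.1 - ψ x.1| * (κ + 2 * κ ^ 2 * C₀) := by gcongr
    _ = _ := by ring

/- `ũ` is affine in the vertical variable, so the singular factor `gap⁻²` never enters. -/
lemma gap_mul_abs_lapl_util_le :
    gap ε h1 h2 x.1 * |lapl n (util n ε h1 h2 φ ψ) x| ≤
      n * ((C2norm n φ + C2norm n ψ) * (gap ε h1 h2 x.1 + 2 * κ * ‖x.1‖) +
        |φ x.1 - ψ x.1| * (κ + 2 * κ ^ 2 * C₀)) := by
  have hpos := hg.gap_pos hx.1.le
  have hκ := hg.kappa_nonneg
  have hC := hg.const_pos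
  have hterm (α : Fin n) : gap ε h1 h2 x.1 * |utilDD ε h1 h2 φ ψ (dir n α) x| ≤
      (C2norm n φ + C2norm n ψ) * (gap ε h1 h2 x.1 + 2 * κ * ‖x.1‖) +
        |φ x.1 - ψ x.1| * (κ + 2 * κ ^ 2 * C₀) := by
    rcases dir_horizontal_or_eq_vert α with ⟨hfst, hsnd⟩ | hvert
    · exact hg.gap_mul_abs_utilDD_le hφ hψ hx hfst.le hsnd
    · have hM0 := add_nonneg (C2norm_nonneg φ) (C2norm_nonneg ψ)
      have hzero : utilDD ε h1 h2 φ ψ (vert n) x = 0 := by simp [utilDD, ubarDD, vert]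
      rw [hvert, hzero, abs_zero, mul_zero]
      positivity
  simp only [lapl, hg.smoothGap.fderiv_fderiv_util _ hφ hψ hx]
  calc _ ≤ gap ε h1 h2 x.1 * ∑ α, |utilDD ε h1 h2 φ ψ (dir n α) x| := by
        gcongr
        exact Finset.abs_sum_le_sum_abs _ _
    _ = ∑ α, gap ε h1 h2 x.1 * |utilDD ε h1 h2 φ ψ (dir n α) x| := Finset.mul_sum _ _ _
    _ ≤ ∑ _α : Fin n, ((C2norm n φ + C2norm n ψ) * (gap ε h1 h2 x.1 + 2 * κ * ‖x.1‖) +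
          |φ x.1 - ψ x.1| * (κ + 2 * κ ^ 2 * C₀)) := Finset.sum_le_sum fun α _ => hterm α
    _ = _ := by rw [Finset.sum_const, Finset.card_univ, Fintype.card_fin, nsmul_eq_mul]

end NarrowGap

/-! ### The weighted energy inequality -/

instance {n : ℕ} : (volume : Measure (Efull n)).IsAddHaarMeasure :=
  inferInstanceAs ((volume : Measure (Ep n)).prod (volume : Measure ℝ)).IsAddHaarMeasure

lemma memLp_top_comp_fst {n : ℕ} {f : Ep n → ℝ} (hf : ContinuousOn f (closedBall 0 1))
    {Ω : Set (Efull n)} (hΩ : MeasurableSet Ω) (hsub : ∀ x ∈ Ω, ‖x.1‖ ≤ 1) :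
    MemLp (fun x : Efull n => f x.1) ⊤ (volume.restrict Ω) := by
  obtain ⟨B, hB⟩ := (isCompact_closedBall (0 : Ep n) 1).exists_bound_of_continuousOn hf
  refine memLp_top_of_bound ((hf.comp continuousOn_fst fun x hx =>
    mem_closedBall_zero_iff.2 (hsub x hx)).aestronglyMeasurable hΩ) B ?_
  filter_upwards [ae_restrict_mem hΩ] with x hx
  exact hB x.1 (mem_closedBall_zero_iff.2 (hsub x hx))

/-- A `C²` function on `Ω₁` of finite energy with square integrable Laplacian that vanishes on the
top and bottom graphs. The boundary condition is expressed by compactness, inside the open region,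
of the superlevel sets of `|w|` over smaller balls. -/
structure VanishesOnGraphs (n : ℕ) (ε : ℝ) (h1 h2 : Ep n → ℝ) (w : Efull n → ℝ) : Prop where
  contDiffOn : ContDiffOn ℝ 2 w (Omega n ε h1 h2 1)
  memLp : MemLp w 2 (volume.restrict (Omega n ε h1 h2 1))
  memLp_fderiv : MemLp (fderiv ℝ w) 2 (volume.restrict (Omega n ε h1 h2 1))
  memLp_lapl : MemLp (lapl n w) 2 (volume.restrict (Omega n ε h1 h2 1))
  isCompact_superlevel (r : ℝ) (_ : r < 1) (t : ℝ) (_ : 0 < t) :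
    IsCompact {x ∈ Omega n ε h1 h2 1 | ‖x.1‖ ≤ r ∧ t ≤ |w x|}

/-- The vertical profile `b = (x_n - (h₁ + h₂)/2)/δ²`. Its vertical derivative is `1/δ²` while
`|b| ≤ 1/(2δ)`, so it encodes the one-dimensional Poincaré inequality across the gap. -/
def profile {n : ℕ} (ε : ℝ) (h1 h2 : Ep n → ℝ) (x : Efull n) : ℝ :=
  (x.2 - (h1 x.1 + h2 x.1) / 2) / gap ε h1 h2 x.1 ^ 2

section Profile

variable {n : ℕ} {ε : ℝ} {h1 h2 : Ep n → ℝ} {x : Efull n}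

lemma hasLineDerivAt_profile_vert :
    HasLineDerivAt ℝ (profile ε h1 h2) (1 / gap ε h1 h2 x.1 ^ 2) x (vert n) := by
  have h : (fun t : ℝ => profile ε h1 h2 (x + t • vert n)) = fun t =>
      (x.2 + t - (h1 x.1 + h2 x.1) / 2) / gap ε h1 h2 x.1 ^ 2 := by
    funext t
    simp [profile, vert]
  rw [HasLineDerivAt, h]
  exact (((hasDerivAt_id (0 : ℝ)).const_add x.2).sub_const _).div_const _

namespace SmoothGap

variable (hg : SmoothGap n ε h1 h2)
include hg

lemma continuousOn_gap : ContinuousOn (gap ε h1 h2) (closedBall 0 1) :=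
  (continuousOn_const.add hg.smooth_top.continuousOn).sub hg.smooth_bot.continuousOn

lemma memLp_top_gap :
    MemLp (fun x : Efull n => gap ε h1 h2 x.1) ⊤ (volume.restrict (Omega n ε h1 h2 1)) :=
  memLp_top_comp_fst hg.continuousOn_gap hg.isOpen_Omega.measurableSet fun _ hx => hx.1.le

lemma memLp_top_inv_gap :
    MemLp (fun x : Efull n => (gap ε h1 h2 x.1)⁻¹) ⊤ (volume.restrict (Omega n ε h1 h2 1)) :=
  memLp_top_comp_fst
    (hg.continuousOn_gap.inv₀ fun y hy => (hg.gap_pos y (mem_closedBall_zero_iff.1 hy)).ne')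
    hg.isOpen_Omega.measurableSet fun _ hx => hx.1.le

lemma contDiffOn_profile : ContDiffOn ℝ 2 (profile ε h1 h2) (Omega n ε h1 h2 1) := by
  have hS : ∀ x ∈ Omega n ε h1 h2 1, ‖x.1‖ ≤ 1 := fun x hx => hx.1.le
  exact (contDiff_snd.contDiffOn.sub (((contDiffOn_comp_fst hg.smooth_top hS).add
    (contDiffOn_comp_fst hg.smooth_bot hS)).div_const 2)).div ((hg.contDiffOn_gap hS).pow 2)
    fun x hx => pow_ne_zero _ (hg.gap_pos _ (hS x hx)).ne'

lemma two_mul_abs_profile_le (hx : x ∈ Omega n ε h1 h2 1) :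
    2 * |profile ε h1 h2 x| ≤ (gap ε h1 h2 x.1)⁻¹ := by
  have hpos := hg.gap_pos x.1 hx.1.le
  have hnum : 2 * |x.2 - (h1 x.1 + h2 x.1) / 2| ≤ gap ε h1 h2 x.1 := by
    rw [← abs_two, ← abs_mul, abs_le, gap]
    constructor <;> linarith [hx.2.1, hx.2.2]
  rw [profile, abs_div, abs_of_pos (pow_pos hpos 2), ← mul_div_assoc]
  calc _ ≤ gap ε h1 h2 x.1 / gap ε h1 h2 x.1 ^ 2 := by gcongr
    _ = _ := by field_simp

lemma memLp_top_profile :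
    MemLp (profile ε h1 h2) ⊤ (volume.restrict (Omega n ε h1 h2 1)) := by
  refine hg.memLp_top_inv_gap.of_le (hg.contDiffOn_profile.continuousOn.aestronglyMeasurable
    hg.isOpen_Omega.measurableSet) ?_
  filter_upwards [ae_restrict_mem hg.isOpen_Omega.measurableSet] with x hx
  rw [Real.norm_eq_abs, Real.norm_eq_abs]
  linarith [hg.two_mul_abs_profile_le hx, abs_nonneg (profile ε h1 h2 x),
    le_abs_self (gap ε h1 h2 x.1)⁻¹]

end SmoothGap

end Profile

section Energy

lemma fderiv_weight_comp_fst {n : ℕ} {η : Ep n → ℝ} (hη : ContDiff ℝ 1 η) (x v : Efull n) :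
    fderiv ℝ (fun x : Efull n => η x.1) x v = fderiv ℝ η x.1 v.1 := by
  have h := (hη.differentiable one_ne_zero x.1).hasFDerivAt.comp x hasFDerivAt_fst
  exact DFunLike.congr_fun h.fderiv v

lemma fderiv_weight_sq_mul {n : ℕ} {η : Ep n → ℝ} (hη : ContDiff ℝ 1 η) {f : Efull n → ℝ}
    {x : Efull n} (hf : DifferentiableAt ℝ f x) (v : Efull n) :
    fderiv ℝ (fun y : Efull n => η y.1 ^ 2 * f y) x v =
      2 * η x.1 * fderiv ℝ η x.1 v.1 * f x + η x.1 ^ 2 * fderiv ℝ f x v := by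
  have hfst : DifferentiableAt ℝ (fun y : Efull n => η y.1) x :=
    (hη.differentiable one_ne_zero x.1).comp x differentiableAt_fst
  rw [HasFDerivAt.fderiv (f := fun y : Efull n => η y.1 ^ 2 * f y)
    ((hfst.hasFDerivAt.pow 2).mul hf.hasFDerivAt)]
  simp only [Nat.add_one_sub_one, pow_one, nsmul_eq_mul, Nat.cast_ofNat, add_apply, smul_apply,
    smul_eq_mul, fderiv_weight_comp_fst hη]
  ring

variable {n : ℕ} {ε r E : ℝ} {h1 h2 : Ep n → ℝ} {w : Efull n → ℝ} {η : Ep n → ℝ}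

lemma SmoothGap.memLp_weight_mul (hg : SmoothGap n ε h1 h2) (hη : ContDiff ℝ 1 η)
    {f : Efull n → ℝ} (hf : MemLp f 2 (volume.restrict (Omega n ε h1 h2 1))) :
    MemLp (fun x => η x.1 * f x) 2 (volume.restrict (Omega n ε h1 h2 1)) :=
  hf.mul (memLp_top_comp_fst hη.continuous.continuousOn hg.isOpen_Omega.measurableSet
    fun _ hx => hx.1.le)

lemma sum_fderiv_dir_sq_le (η : Ep n → ℝ) (y : Ep n) :
    ∑ α, fderiv ℝ η y (dir n α).1 ^ 2 ≤ n * ‖fderiv ℝ η y‖ ^ 2 := by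
  calc ∑ α, fderiv ℝ η y (dir n α).1 ^ 2 ≤ ∑ _α : Fin n, ‖fderiv ℝ η y‖ ^ 2 := by
        refine Finset.sum_le_sum fun α _ => sq_le_sq.2 ?_
        rw [abs_of_nonneg (norm_nonneg (fderiv ℝ η y))]
        exact (fderiv ℝ η y).unit_le_opNorm _ ((norm_fst_le _).trans (norm_dir_le_one α))
    _ = n * ‖fderiv ℝ η y‖ ^ 2 := by simp

lemma caccioppoli_pointwise_le {x : Efull n} (hgap : gap ε h1 h2 x.1 ≠ 0)
    (hE : n * ‖fderiv ℝ η x.1‖ ^ 2 ≤ 1 / 16 * (η x.1 / gap ε h1 h2 x.1) ^ 2 + E) :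
    1 / 2 * (∑ α, (η x.1 * fderiv ℝ w x (dir n α)) ^ 2) -
        1 / 4 * (η x.1 * (w x / gap ε h1 h2 x.1)) ^ 2 -
        (2 * E * w x ^ 2 + 2 * (η x.1 * (gap ε h1 h2 x.1 * lapl n w x)) ^ 2) ≤
      (∑ α, (η x.1 * fderiv ℝ w x (dir n α)) ^ 2) +
        (η x.1 ^ 2 * (w x * lapl n w x) + 2 * η x.1 * w x *
          ∑ α, fderiv ℝ η x.1 (dir n α).1 * fderiv ℝ w x (dir n α)) := by
  have hcross : -(2 * w x ^ 2 * ∑ α, fderiv ℝ η x.1 (dir n α).1 ^ 2) ≤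
      1 / 2 * (∑ α, (η x.1 * fderiv ℝ w x (dir n α)) ^ 2) + 2 * η x.1 * w x *
        ∑ α, fderiv ℝ η x.1 (dir n α).1 * fderiv ℝ w x (dir n α) := by
    simp only [Finset.mul_sum, ← Finset.sum_add_distrib, ← Finset.sum_neg_distrib]
    refine Finset.sum_le_sum fun α _ => ?_
    linarith [sq_nonneg (η x.1 * fderiv ℝ w x (dir n α) +
      2 * (w x * fderiv ℝ η x.1 (dir n α).1))]
  have hweight : w x ^ 2 * ∑ α, fderiv ℝ η x.1 (dir n α).1 ^ 2 ≤
      w x ^ 2 * (1 / 16 * (η x.1 / gap ε h1 h2 x.1) ^ 2 + E) := by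
    gcongr
    exact (sum_fderiv_dir_sq_le η x.1).trans hE
  have hsource : η x.1 ^ 2 * (w x * lapl n w x) =
      (η x.1 * (w x / gap ε h1 h2 x.1)) * (η x.1 * (gap ε h1 h2 x.1 * lapl n w x)) := by
    field_simp
  have hsplit : w x ^ 2 * (η x.1 / gap ε h1 h2 x.1) ^ 2 =
      (η x.1 * (w x / gap ε h1 h2 x.1)) ^ 2 := by ring
  nlinarith [sq_nonneg (η x.1 * (w x / gap ε h1 h2 x.1) +
    4 * (η x.1 * (gap ε h1 h2 x.1 * lapl n w x)))]

namespace VanishesOnGraphs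

lemma memLp_fderiv_apply (hw : VanishesOnGraphs n ε h1 h2 w) (v : Efull n) :
    MemLp (fun x => fderiv ℝ w x v) 2 (volume.restrict (Omega n ε h1 h2 1)) :=
  (ContinuousLinearMap.apply ℝ ℝ v).comp_memLp' hw.memLp_fderiv

variable (hw : VanishesOnGraphs n ε h1 h2 w) (hg : SmoothGap n ε h1 h2) (hη : ContDiff ℝ 1 η)
include hw hg hη

lemma integrableOn_weight_fderiv_sq (v : Efull n) :
    IntegrableOn (fun x => (η x.1 * fderiv ℝ w x v) ^ 2) (Omega n ε h1 h2 1) :=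
  (hg.memLp_weight_mul hη (hw.memLp_fderiv_apply v)).integrable_sq

lemma integrableOn_weight_div_gap_sq :
    IntegrableOn (fun x => (η x.1 * (w x / gap ε h1 h2 x.1)) ^ 2) (Omega n ε h1 h2 1) := by
  simpa only [div_eq_inv_mul, IntegrableOn] using
    (hg.memLp_weight_mul hη (hw.memLp.mul' hg.memLp_top_inv_gap)).integrable_sq

lemma integrableOn_weight_gap_mul_lapl_sq :
    IntegrableOn (fun x => (η x.1 * (gap ε h1 h2 x.1 * lapl n w x)) ^ 2) (Omega n ε h1 h2 1) :=
  (hg.memLp_weight_mul hη (hw.memLp_lapl.mul hg.memLp_top_gap)).integrable_sq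

lemma integrableOn_weight_fderiv_mul_profile :
    IntegrableOn (fun x => η x.1 * fderiv ℝ w x (vert n) * (profile ε h1 h2 x * (η x.1 * w x)))
      (Omega n ε h1 h2 1) :=
  (hg.memLp_weight_mul hη (hw.memLp_fderiv_apply (vert n))).integrable_mul
    ((hg.memLp_weight_mul hη hw.memLp).mul' hg.memLp_top_profile : MemLp _ 2 _)

variable (hr : r < 1) (hsupp : ∀ y, η y ≠ 0 → ‖y‖ ≤ r)
include hr hsupp

lemma setIntegral_weight_sq_divergence_eq_zero {ι : Type*} [Fintype ι] (d : ι → Efull n)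
    {F : ι → Efull n → ℝ} (hF : ∀ i, ContDiffOn ℝ 1 (F i) (Omega n ε h1 h2 1))
    (hInt : IntegrableOn (fun x => η x.1 ^ 2 * ∑ i, fderiv ℝ w x (d i) * F i x)
      (Omega n ε h1 h2 1))
    (hInt' : IntegrableOn (fun x => η x.1 ^ 2 * (w x * ∑ i, fderiv ℝ (F i) x (d i)) +
      2 * η x.1 * w x * ∑ i, fderiv ℝ η x.1 (d i).1 * F i x) (Omega n ε h1 h2 1)) :
    ∫ x in Omega n ε h1 h2 1, (η x.1 ^ 2 * (∑ i, fderiv ℝ w x (d i) * F i x) +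
      (η x.1 ^ 2 * (w x * ∑ i, fderiv ℝ (F i) x (d i)) +
        2 * η x.1 * w x * ∑ i, fderiv ℝ η x.1 (d i).1 * F i x)) = 0 := by
  have hΩ := hg.isOpen_Omega
  have hgrad (x : Efull n) : ∑ i, fderiv ℝ w x (d i) * (η x.1 ^ 2 * F i x) =
      η x.1 ^ 2 * ∑ i, fderiv ℝ w x (d i) * F i x := by
    rw [Finset.mul_sum]
    exact Finset.sum_congr rfl fun i _ => by ring
  have hdiv : Set.EqOn (fun x => w x * ∑ i, fderiv ℝ (fun y => η y.1 ^ 2 * F i y) x (d i))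
      (fun x => η x.1 ^ 2 * (w x * ∑ i, fderiv ℝ (F i) x (d i)) +
        2 * η x.1 * w x * ∑ i, fderiv ℝ η x.1 (d i).1 * F i x) (Omega n ε h1 h2 1) := by
    intro x hx
    have hFx (i : ι) : DifferentiableAt ℝ (F i) x :=
      ((hF i).differentiableOn one_ne_zero).differentiableAt (hΩ.mem_nhds hx)
    simp only [fderiv_weight_sq_mul hη (hFx _), Finset.mul_sum, ← Finset.sum_add_distrib]
    exact Finset.sum_congr rfl fun i _ => by ring
  have hzero := setIntegral_fderiv_mul_add_mul_divergence_eq_zero volume d hΩ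
    (V := fun i y => η y.1 ^ 2 * F i y) (hw.contDiffOn.of_le one_le_two)
    (fun i => ((hη.comp contDiff_fst).pow 2).contDiffOn.mul (hF i))
    (fun t ht => ⟨_, hw.isCompact_superlevel r hr t ht, fun x hx => hx.1,
      fun x hx i hi hwx => ⟨hx, hsupp x.1 fun h0 => hi (by simp [h0]), hwx⟩⟩)
    (by simpa only [hgrad] using hInt)
    (hInt'.congr_fun hdiv.symm hΩ.measurableSet)
  rw [← hzero]
  refine setIntegral_congr_fun hΩ.measurableSet fun x hx => ?_
  simp only [hgrad, ← hdiv hx]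

lemma setIntegral_weight_mul_profile_eq_zero :
    ∫ x in Omega n ε h1 h2 1,
      (2 * (η x.1 * fderiv ℝ w x (vert n) * (profile ε h1 h2 x * (η x.1 * w x))) +
        (η x.1 * (w x / gap ε h1 h2 x.1)) ^ 2) = 0 := by
  have hΩ := hg.isOpen_Omega
  have hb : ContDiffOn ℝ 1 (profile ε h1 h2) (Omega n ε h1 h2 1) :=
    hg.contDiffOn_profile.of_le one_le_two
  have hw1 : ContDiffOn ℝ 1 w (Omega n ε h1 h2 1) := hw.contDiffOn.of_le one_le_two
  have hderiv {x : Efull n} (hx : x ∈ Omega n ε h1 h2 1) :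
      fderiv ℝ (fun y => profile ε h1 h2 y * w y) x (vert n) =
        profile ε h1 h2 x * fderiv ℝ w x (vert n) + w x / gap ε h1 h2 x.1 ^ 2 := by
    have hbx := (hb.differentiableOn one_ne_zero).differentiableAt (hΩ.mem_nhds hx)
    have hwx := (hw1.differentiableOn one_ne_zero).differentiableAt (hΩ.mem_nhds hx)
    have hbv := (hbx.hasFDerivAt.hasLineDerivAt (vert n)).unique hasLineDerivAt_profile_vert
    have hmul : HasFDerivAt (fun y => profile ε h1 h2 y * w y) _ x :=
      hbx.hasFDerivAt.mul hwx.hasFDerivAt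
    simp only [hmul.fderiv, add_apply, smul_apply, smul_eq_mul, hbv]
    ring
  have hvert : (vert n).1 = 0 := rfl
  have hcross := hw.integrableOn_weight_fderiv_mul_profile hg hη
  have hzero := hw.setIntegral_weight_sq_divergence_eq_zero hg hη hr hsupp
    (fun _ : Unit => vert n) (F := fun _ y => profile ε h1 h2 y * w y) (fun _ => hb.mul hw1)
    (hcross.congr_fun (fun x _ => by simp only [univ_unique, sum_singleton]; ring) hΩ.measurableSet)
    ((hcross.add (hw.integrableOn_weight_div_gap_sq hg hη)).congr_fun
      (fun x hx => by
        simp only [Pi.add_apply, univ_unique, sum_singleton, hderiv hx, hvert, map_zero, zero_mul]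
        ring) hΩ.measurableSet)
  rw [← hzero]
  refine setIntegral_congr_fun hΩ.measurableSet fun x hx => ?_
  simp only [univ_unique, sum_singleton, hderiv hx, hvert, map_zero, zero_mul]
  ring

lemma setIntegral_weight_div_gap_sq_le :
    ∫ x in Omega n ε h1 h2 1, (η x.1 * (w x / gap ε h1 h2 x.1)) ^ 2 ≤
      ∫ x in Omega n ε h1 h2 1, (η x.1 * fderiv ℝ w x (vert n)) ^ 2 := by
  have hP := hw.integrableOn_weight_div_gap_sq hg hη
  have hV := hw.integrableOn_weight_fderiv_sq hg hη (vert n)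
  have hcross := hw.integrableOn_weight_fderiv_mul_profile hg hη
  have hzero := hw.setIntegral_weight_mul_profile_eq_zero hg hη hr hsupp
  rw [← sub_nonpos, ← integral_sub hP hV]
  refine (setIntegral_mono_on (hP.sub hV) (((hcross.const_mul 2).add hP).const_mul 2)
    hg.isOpen_Omega.measurableSet fun x hx => ?_).trans_eq
    (by rw [integral_const_mul]; exact mul_eq_zero_of_right 2 hzero)
  have hprofile : |2 * (profile ε h1 h2 x * (η x.1 * w x))| ≤
      |η x.1 * (w x / gap ε h1 h2 x.1)| := by
    calc |2 * (profile ε h1 h2 x * (η x.1 * w x))|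
        = 2 * |profile ε h1 h2 x| * |η x.1 * w x| := by rw [abs_mul, abs_mul, abs_two, mul_assoc]
      _ ≤ (gap ε h1 h2 x.1)⁻¹ * |η x.1 * w x| := by
          gcongr
          exact hg.two_mul_abs_profile_le hx
      _ = |η x.1 * (w x / gap ε h1 h2 x.1)| := by
          rw [← mul_div_assoc, abs_div, abs_of_pos (hg.gap_pos _ hx.1.le), div_eq_inv_mul]
  have hcs := sq_le_sq.2 hprofile
  simp only [Pi.sub_apply, Pi.add_apply]
  nlinarith [sq_nonneg (η x.1 * fderiv ℝ w x (vert n) + 2 * (profile ε h1 h2 x * (η x.1 * w x)))]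

lemma setIntegral_caccioppoli :
    IntegrableOn (fun x => (∑ α, (η x.1 * fderiv ℝ w x (dir n α)) ^ 2) +
      (η x.1 ^ 2 * (w x * lapl n w x) + 2 * η x.1 * w x *
        ∑ α, fderiv ℝ η x.1 (dir n α).1 * fderiv ℝ w x (dir n α))) (Omega n ε h1 h2 1) ∧
    ∫ x in Omega n ε h1 h2 1, ((∑ α, (η x.1 * fderiv ℝ w x (dir n α)) ^ 2) +
      (η x.1 ^ 2 * (w x * lapl n w x) + 2 * η x.1 * w x *
        ∑ α, fderiv ℝ η x.1 (dir n α).1 * fderiv ℝ w x (dir n α))) = 0 := by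
  have hΩ := hg.isOpen_Omega
  have hsq (x : Efull n) : η x.1 ^ 2 * (∑ α, fderiv ℝ w x (dir n α) * fderiv ℝ w x (dir n α)) =
      ∑ α, (η x.1 * fderiv ℝ w x (dir n α)) ^ 2 := by
    rw [Finset.mul_sum]
    exact Finset.sum_congr rfl fun α _ => by ring
  have hgrad : IntegrableOn (fun x => ∑ α, (η x.1 * fderiv ℝ w x (dir n α)) ^ 2)
      (Omega n ε h1 h2 1) :=
    integrable_finsetSum _ fun α _ => hw.integrableOn_weight_fderiv_sq hg hη (dir n α)
  have hηw := hg.memLp_weight_mul hη hw.memLp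
  have hη' (v : Ep n) : MemLp (fun x : Efull n => fderiv ℝ η x.1 v) ⊤
      (volume.restrict (Omega n ε h1 h2 1)) :=
    memLp_top_comp_fst ((hη.continuous_fderiv one_ne_zero).clm_apply
      continuous_const).continuousOn hΩ.measurableSet fun _ hx => hx.1.le
  have hlapl : IntegrableOn (fun x => η x.1 ^ 2 * (w x * lapl n w x)) (Omega n ε h1 h2 1) :=
    (hηw.integrable_mul (hg.memLp_weight_mul hη hw.memLp_lapl)).congr
      (Eventually.of_forall fun x => by simp only [Pi.mul_apply]; ring)
  have hcross : IntegrableOn (fun x => 2 * η x.1 * w x *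
      ∑ α, fderiv ℝ η x.1 (dir n α).1 * fderiv ℝ w x (dir n α)) (Omega n ε h1 h2 1) :=
    ((hηw.integrable_mul (memLp_finsetSum Finset.univ fun α _ =>
      ((hw.memLp_fderiv_apply (dir n α)).mul' (hη' (dir n α).1) : MemLp _ 2 _))).const_mul 2).congr
      (Eventually.of_forall fun x => by simp only [Pi.mul_apply]; ring)
  have hzero := hw.setIntegral_weight_sq_divergence_eq_zero hg hη hr hsupp (dir n)
    (F := fun α x => fderiv ℝ w x (dir n α))
    (fun α => (hw.contDiffOn.fderiv_of_isOpen hΩ (by norm_num)).clm_apply contDiffOn_const)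
    (by simpa only [hsq] using hgrad) (hlapl.add hcross)
  simp only [hsq] at hzero
  exact ⟨hgrad.add (hlapl.add hcross), hzero⟩

lemma setIntegral_weight_fderiv_sq_le (hn : 0 < n)
    (hE : ∀ y, ‖y‖ < 1 → n * ‖fderiv ℝ η y‖ ^ 2 ≤ 1 / 16 * (η y / gap ε h1 h2 y) ^ 2 + E) :
    ∫ x in Omega n ε h1 h2 1, ∑ α, (η x.1 * fderiv ℝ w x (dir n α)) ^ 2 ≤
      8 * (E * (∫ x in Omega n ε h1 h2 1, w x ^ 2) +
        ∫ x in Omega n ε h1 h2 1, (η x.1 * (gap ε h1 h2 x.1 * lapl n w x)) ^ 2) := by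
  have hΩ := hg.isOpen_Omega
  obtain ⟨hidentity, hzero⟩ := hw.setIntegral_caccioppoli hg hη hr hsupp
  have hG : IntegrableOn (fun x => ∑ α, (η x.1 * fderiv ℝ w x (dir n α)) ^ 2)
      (Omega n ε h1 h2 1) :=
    integrable_finsetSum _ fun α _ => hw.integrableOn_weight_fderiv_sq hg hη (dir n α)
  have hP := hw.integrableOn_weight_div_gap_sq hg hη
  have hS := hw.integrableOn_weight_gap_mul_lapl_sq hg hη
  have hPG := (hw.setIntegral_weight_div_gap_sq_le hg hη hr hsupp).trans
    (setIntegral_mono_on (hw.integrableOn_weight_fderiv_sq hg hη (vert n)) hG hΩ.measurableSet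
      fun x _ => by
        rw [sum_dir hn fun v => (η x.1 * fderiv ℝ w x v) ^ 2]
        exact le_add_of_nonneg_left (Finset.sum_nonneg fun _ _ => sq_nonneg _))
  have hW := hw.memLp.integrable_sq
  have hGP := (hG.const_mul (1 / 2)).sub (hP.const_mul (1 / 4))
  have hWS := (hW.const_mul (2 * E)).add (hS.const_mul 2)
  have hmono := setIntegral_mono_on (hGP.sub hWS) hidentity hΩ.measurableSet
    fun x hx => caccioppoli_pointwise_le (hg.gap_pos _ hx.1.le).ne' (hE x.1 hx.1)
  have hsplit := integral_sub hGP hWS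
  simp only [Pi.sub_apply, Pi.add_apply] at hsplit hmono
  rw [hzero, hsplit, integral_sub (hG.const_mul _) (hP.const_mul _),
    integral_add (hW.const_mul _) (hS.const_mul _)] at hmono
  simp only [integral_const_mul] at hmono
  linarith

end VanishesOnGraphs

end Energy

/-! ### The difference of the harmonic function and its interpolant -/

section ClosedRegion

/-- `Ω_r` together with its top, bottom and lateral boundary. -/
def closedOmega (n : ℕ) (ε : ℝ) (h1 h2 : Ep n → ℝ) (r : ℝ) : Set (Efull n) :=
  {x | ‖x.1‖ ≤ r ∧ -ε / 2 + h2 x.1 ≤ x.2 ∧ x.2 ≤ ε / 2 + h1 x.1}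

variable {n : ℕ} {ε r : ℝ} {h1 h2 φ ψ : Ep n → ℝ}

lemma Omega_subset_closedOmega : Omega n ε h1 h2 r ⊆ closedOmega n ε h1 h2 r :=
  fun _ hx => ⟨hx.1.le, hx.2.1.le, hx.2.2.le⟩

lemma isCompact_closedOmega (hh1 : ContinuousOn h1 (closedBall 0 r))
    (hh2 : ContinuousOn h2 (closedBall 0 r)) : IsCompact (closedOmega n ε h1 h2 r) := by
  obtain ⟨a, ha⟩ := (isCompact_closedBall (0 : Ep n) r).exists_bound_of_continuousOn hh1
  obtain ⟨b, hb⟩ := (isCompact_closedBall (0 : Ep n) r).exists_bound_of_continuousOn hh2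
  set K : Set (Efull n) := closedBall (0 : Ep n) r ×ˢ Set.Icc (-ε / 2 - b) (ε / 2 + a)
  have hK : IsCompact K := (isCompact_closedBall _ _).prod isCompact_Icc
  have htop : ContinuousOn (fun x : Efull n => ε / 2 + h1 x.1) K :=
    continuousOn_const.add (hh1.comp continuousOn_fst fun _ hx => hx.1)
  have hbot : ContinuousOn (fun x : Efull n => -ε / 2 + h2 x.1) K :=
    continuousOn_const.add (hh2.comp continuousOn_fst fun _ hx => hx.1)
  have hclosed := (hK.isClosed.isClosed_le hbot continuousOn_snd).inter
    (hK.isClosed.isClosed_le continuousOn_snd htop)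
  convert hK.of_isClosed_subset hclosed fun x hx => hx.1.1 using 1
  ext x
  constructor
  · rintro ⟨hx, hlow, hupp⟩
    have hxr : x.1 ∈ closedBall (0 : Ep n) r := mem_closedBall_zero_iff.2 hx
    have hxK : x ∈ K :=
      ⟨hxr, by linarith [(abs_le.1 (hb _ hxr)).1], by linarith [(abs_le.1 (ha _ hxr)).2]⟩
    exact ⟨⟨hxK, hlow⟩, hxK, hupp⟩
  · rintro ⟨⟨hxK, hlow⟩, -, hupp⟩
    exact ⟨mem_closedBall_zero_iff.1 hxK.1, hlow, hupp⟩

lemma closedOmega_subset (hr : r < 1) :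
    closedOmega n ε h1 h2 r ⊆ Omega n ε h1 h2 1 ∪ Gammap n ε h1 1 ∪ Gammam n ε h2 1 := by
  rintro x ⟨hx, hlow, hupp⟩
  have hx1 : ‖x.1‖ < 1 := hx.trans_lt hr
  rcases hlow.eq_or_lt with hbot | hlow
  · exact Or.inr ⟨hx1.le, hbot.symm⟩
  rcases hupp.eq_or_lt with htop | hupp
  · exact Or.inl (Or.inr ⟨hx1.le, htop⟩)
  · exact Or.inl (Or.inl ⟨hx1, hlow, hupp⟩)

lemma util_top {x : Efull n} (hx : x ∈ Gammap n ε h1 r) (hgap : gap ε h1 h2 x.1 ≠ 0) :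
    util n ε h1 h2 φ ψ x = φ x.1 := by
  have hubar : ubar n ε h1 h2 x = 1 := by
    rw [gap] at hgap
    rw [ubar, hx.2, div_eq_one_iff_eq hgap]
    ring
  rw [util, hubar, sub_self, mul_one, mul_zero, add_zero]

lemma util_bot {x : Efull n} (hx : x ∈ Gammam n ε h2 r) :
    util n ε h1 h2 φ ψ x = ψ x.1 := by
  have hubar : ubar n ε h1 h2 x = 0 := by
    rw [ubar, hx.2, div_eq_zero_iff]
    exact Or.inl (by ring)
  rw [util, hubar, sub_zero, mul_one, mul_zero, zero_add]

lemma AttainsBV.sub_util_eq_zero {u : Efull n → ℝ} (hu : AttainsBV n ε h1 h2 u φ ψ)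
    (hgap : ∀ y : Ep n, ‖y‖ ≤ 1 → gap ε h1 h2 y ≠ 0) {x : Efull n}
    (hx : x ∈ Gammap n ε h1 1 ∪ Gammam n ε h2 1) : u x - util n ε h1 h2 φ ψ x = 0 := by
  rcases hx with hx | hx
  · rw [util_top hx (hgap _ hx.1), ← (hu.2 _ hx.1).1, ← hx.2, sub_self]
  · rw [util_bot hx, ← (hu.2 _ hx.1).2, ← hx.2, sub_self]

lemma SmoothGap.isFiniteMeasure_restrict_Omega (hg : SmoothGap n ε h1 h2) :
    IsFiniteMeasure (volume.restrict (Omega n ε h1 h2 1)) :=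
  isFiniteMeasure_restrict.2 (measure_ne_top_of_subset Omega_subset_closedOmega
    (isCompact_closedOmega hg.smooth_top.continuousOn
      hg.smooth_bot.continuousOn).measure_lt_top.ne)

lemma SmoothGap.isCompact_superlevel_sub_util (hg : SmoothGap n ε h1 h2)
    (hφ : ContDiffOn ℝ 2 φ (closedBall 0 1)) (hψ : ContDiffOn ℝ 2 ψ (closedBall 0 1))
    {u : Efull n → ℝ} (hu : AttainsBV n ε h1 h2 u φ ψ) (hr : r < 1) {t : ℝ} (ht : 0 < t) :
    IsCompact {x ∈ Omega n ε h1 h2 1 | ‖x.1‖ ≤ r ∧ t ≤ |u x - util n ε h1 h2 φ ψ x|} := by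
  have hball : closedBall (0 : Ep n) r ⊆ closedBall 0 1 := closedBall_subset_closedBall hr.le
  have hK : IsCompact (closedOmega n ε h1 h2 r) := isCompact_closedOmega
    (hg.smooth_top.continuousOn.mono hball) (hg.smooth_bot.continuousOn.mono hball)
  have hcont : ContinuousOn (fun x => |u x - util n ε h1 h2 φ ψ x|) (closedOmega n ε h1 h2 r) :=
    ((hu.1.mono (closedOmega_subset hr)).sub
      (hg.contDiffOn_util hφ hψ fun x hx => hx.1.trans hr.le).continuousOn).abs
  have hclosed := hK.isClosed.isClosed_le (continuousOn_const (c := t)) hcont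
  convert hK.of_isClosed_subset hclosed fun x hx => hx.1 using 1
  ext x
  constructor
  · rintro ⟨hx, hxr, hxt⟩
    exact ⟨⟨hxr, hx.2.1.le, hx.2.2.le⟩, hxt⟩
  · rintro ⟨hx, hxt⟩
    refine ⟨?_, hx.1, hxt⟩
    rcases closedOmega_subset hr hx with (hx' | hx') | hx'
    · exact hx'
    all_goals
      rw [hu.sub_util_eq_zero (fun y hy => (hg.gap_pos y hy).ne') (by simp [hx']), abs_zero] at hxt
      exact absurd hxt ht.not_ge

end ClosedRegion

section Difference

variable {n : ℕ}

lemma lapl_sub {Ω : Set (Efull n)} (hΩ : IsOpen Ω) {f g : Efull n → ℝ} (hf : ContDiffOn ℝ 2 f Ω)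
    (hg : ContDiffOn ℝ 2 g Ω) {x : Efull n} (hx : x ∈ Ω) :
    lapl n (fun z => f z - g z) x = lapl n f x - lapl n g x := by
  simp only [lapl, ← Finset.sum_sub_distrib]
  refine Finset.sum_congr rfl fun α _ => ?_
  have hdiff {k : Efull n → ℝ} (hk : ContDiffOn ℝ 2 k Ω) :
      DifferentiableAt ℝ (fun y => fderiv ℝ k y (dir n α)) x :=
    (((hk.fderiv_of_isOpen hΩ (m := 1) (by norm_num)).clm_apply contDiffOn_const).contDiffAt
      (hΩ.mem_nhds hx)).differentiableAt one_ne_zero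
  have heq : (fun y => fderiv ℝ (fun z => f z - g z) y (dir n α)) =ᶠ[𝓝 x]
      fun y => fderiv ℝ f y (dir n α) - fderiv ℝ g y (dir n α) := by
    filter_upwards [hΩ.mem_nhds hx] with y hy
    rw [fderiv_fun_sub ((hf.contDiffAt (hΩ.mem_nhds hy)).differentiableAt two_ne_zero)
      ((hg.contDiffAt (hΩ.mem_nhds hy)).differentiableAt two_ne_zero)]
    rfl
  rw [heq.fderiv_eq, fderiv_fun_sub (hdiff hf) (hdiff hg)]
  rfl

lemma continuousOn_lapl {Ω : Set (Efull n)} (hΩ : IsOpen Ω) {f : Efull n → ℝ}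
    (hf : ContDiffOn ℝ 2 f Ω) : ContinuousOn (lapl n f) Ω :=
  continuousOn_finsetSum _ fun _ _ =>
    (((hf.fderiv_of_isOpen hΩ (m := 1) (by norm_num)).clm_apply
      contDiffOn_const).continuousOn_fderiv_of_isOpen hΩ le_rfl).clm_apply continuousOn_const

variable {ε κ C₀ : ℝ} {h1 h2 φ ψ : Ep n → ℝ} {u : Efull n → ℝ}

lemma HarmBV.memLp (hu : HarmBV n ε h1 h2 u φ ψ) (hΩ : MeasurableSet (Omega n ε h1 h2 1)) :
    MemLp u 2 (volume.restrict (Omega n ε h1 h2 1)) := by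
  have hmeas := hu.1.continuousOn.aestronglyMeasurable (μ := volume) hΩ
  refine (memLp_two_iff_integrable_sq_norm hmeas).2 (hu.2.2.1.mono' (hmeas.norm.pow 2) ?_)
  exact Eventually.of_forall fun x => by simp

lemma HarmBV.memLp_fderiv (hu : HarmBV n ε h1 h2 u φ ψ) (hΩ : IsOpen (Omega n ε h1 h2 1)) :
    MemLp (fderiv ℝ u) 2 (volume.restrict (Omega n ε h1 h2 1)) := by
  have hmeas := (hu.1.continuousOn_fderiv_of_isOpen hΩ one_le_two).aestronglyMeasurable
    (μ := volume) hΩ.measurableSet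
  refine (memLp_two_iff_integrable_sq_norm hmeas).2 (hu.2.2.1.mono' (hmeas.norm.pow 2) ?_)
  exact Eventually.of_forall fun x => by simpa using sq_nonneg (u x)

namespace NarrowGap

variable (hg : NarrowGap n ε κ C₀ h1 h2)
  (hφ : ContDiffOn ℝ 2 φ (closedBall 0 1)) (hψ : ContDiffOn ℝ 2 ψ (closedBall 0 1))
include hg hφ hψ

lemma contDiffOn_util : ContDiffOn ℝ 2 (util n ε h1 h2 φ ψ) (Omega n ε h1 h2 1) :=
  hg.smoothGap.contDiffOn_util hφ hψ fun _ hx => hx.1.le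

lemma memLp_util : MemLp (util n ε h1 h2 φ ψ) 2 (volume.restrict (Omega n ε h1 h2 1)) := by
  have := hg.smoothGap.isFiniteMeasure_restrict_Omega
  have hΩ := hg.smoothGap.isOpen_Omega.measurableSet
  refine MemLp.of_bound ((hg.contDiffOn_util hφ hψ).continuousOn.aestronglyMeasurable hΩ)
    (C2norm n φ + C2norm n ψ) ?_
  filter_upwards [ae_restrict_mem hΩ] with x hx
  exact (abs_mul_add_mul_one_sub_le (ubar_nonneg hx) (ubar_le_one hx)).trans
    (abs_add_abs_le_C2norm_add hφ hψ hx.1.le)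

lemma memLp_fderiv_util :
    MemLp (fderiv ℝ (util n ε h1 h2 φ ψ)) 2 (volume.restrict (Omega n ε h1 h2 1)) := by
  have := hg.smoothGap.isFiniteMeasure_restrict_Omega
  have hΩ := hg.smoothGap.isOpen_Omega
  have := hg.eps_pos
  have := hg.const_pos
  have := hg.kappa_nonneg
  have := add_nonneg (C2norm_nonneg φ) (C2norm_nonneg ψ)
  refine MemLp.of_bound (((hg.contDiffOn_util hφ hψ).continuousOn_fderiv_of_isOpen hΩ
    one_le_two).aestronglyMeasurable hΩ.measurableSet)
    ((C2norm n φ + C2norm n ψ) * (1 + (1 + κ) / (ε / C₀))) ?_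
  filter_upwards [ae_restrict_mem hΩ.measurableSet] with x hx
  refine ContinuousLinearMap.opNorm_le_of_unit_norm (by positivity) fun v hv => ?_
  rw [hg.smoothGap.fderiv_util v hφ hψ hx]
  exact hg.abs_utilD_le hφ hψ hx hv.le

lemma memLp_lapl_util :
    MemLp (lapl n (util n ε h1 h2 φ ψ)) 2 (volume.restrict (Omega n ε h1 h2 1)) := by
  have := hg.smoothGap.isFiniteMeasure_restrict_Omega
  have hΩ := hg.smoothGap.isOpen_Omega
  have hκ := hg.kappa_nonneg
  have hC₀ := hg.const_pos
  have hM := add_nonneg (C2norm_nonneg φ) (C2norm_nonneg ψ)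
  refine MemLp.of_bound ((continuousOn_lapl hΩ
    (hg.contDiffOn_util hφ hψ)).aestronglyMeasurable hΩ.measurableSet)
    (n * ((C2norm n φ + C2norm n ψ) * (1 + (2 * κ + (κ + 2 * κ ^ 2 * C₀)) / (ε / C₀)))) ?_
  filter_upwards [ae_restrict_mem hΩ.measurableSet] with x hx
  have hpos := hg.gap_pos hx.1.le
  have hε := div_pos hg.eps_pos hC₀
  calc ‖lapl n (util n ε h1 h2 φ ψ) x‖
      = gap ε h1 h2 x.1 * |lapl n (util n ε h1 h2 φ ψ) x| / gap ε h1 h2 x.1 :=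
        (mul_div_cancel_left₀ _ hpos.ne').symm
    _ ≤ n * ((C2norm n φ + C2norm n ψ) * (gap ε h1 h2 x.1 + 2 * κ * 1) +
          (C2norm n φ + C2norm n ψ) * (κ + 2 * κ ^ 2 * C₀)) / gap ε h1 h2 x.1 := by
        refine div_le_div_of_nonneg_right
          ((hg.gap_mul_abs_lapl_util_le hφ hψ hx).trans ?_) hpos.le
        gcongr
        · exact hx.1.le
        · exact (abs_sub _ _).trans (abs_add_abs_le_C2norm_add hφ hψ hx.1.le)
    _ = n * ((C2norm n φ + C2norm n ψ) *
          (1 + (2 * κ + (κ + 2 * κ ^ 2 * C₀)) / gap ε h1 h2 x.1)) := by field_simp; ring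
    _ ≤ _ := by gcongr; exact hg.eps_div_le_gap hx.1.le

lemma lapl_sub_util (hu : HarmBV n ε h1 h2 u φ ψ) {x : Efull n} (hx : x ∈ Omega n ε h1 h2 1) :
    lapl n (fun z => u z - util n ε h1 h2 φ ψ z) x = -lapl n (util n ε h1 h2 φ ψ) x := by
  rw [lapl_sub hg.smoothGap.isOpen_Omega hu.1 (hg.contDiffOn_util hφ hψ) hx, hu.2.1 x hx,
    zero_sub]

theorem vanishesOnGraphs_sub_util (hu : HarmBV n ε h1 h2 u φ ψ) :
    VanishesOnGraphs n ε h1 h2 (fun z => u z - util n ε h1 h2 φ ψ z) := by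
  have hΩ := hg.smoothGap.isOpen_Omega
  have hutil := hg.contDiffOn_util hφ hψ
  refine ⟨hu.1.sub hutil, (hu.memLp hΩ.measurableSet).sub (hg.memLp_util hφ hψ), ?_, ?_,
    fun r hr t ht => hg.smoothGap.isCompact_superlevel_sub_util hφ hψ hu.2.2.2 hr ht⟩
  · refine ((hu.memLp_fderiv hΩ).sub (hg.memLp_fderiv_util hφ hψ)).ae_eq ?_
    filter_upwards [ae_restrict_mem hΩ.measurableSet] with x hx
    exact (fderiv_fun_sub ((hu.1.contDiffAt (hΩ.mem_nhds hx)).differentiableAt two_ne_zero)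
      ((hutil.contDiffAt (hΩ.mem_nhds hx)).differentiableAt two_ne_zero)).symm
  · refine (hg.memLp_lapl_util hφ hψ).neg.ae_eq ?_
    filter_upwards [ae_restrict_mem hΩ.measurableSet] with x hx
    exact (hg.lapl_sub_util hφ hψ hu hx).symm

end NarrowGap

end Difference

/-! ### The weight -/

section AlgebraicWeight

variable {E : Type*} [NormedAddCommGroup E]

/-- The algebraic weight `(1 + a²|y - y₀|²)^{-m}`, concentrated in the ball of radius `1/a` about
`y₀`. -/
def algWeight (a : ℝ) (m : ℕ) (y₀ y : E) : ℝ := ((1 + a ^ 2 * ‖y - y₀‖ ^ 2) ^ m)⁻¹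

/-- The logarithmic slope of `algWeight a m` at distance `s` from its centre. -/
def algSlope (a : ℝ) (m : ℕ) (s : ℝ) : ℝ := 2 * m * a ^ 2 * s / (1 + a ^ 2 * s ^ 2)

lemma algWeight_pos (a : ℝ) (m : ℕ) (y₀ y : E) : 0 < algWeight a m y₀ y := by
  unfold algWeight
  positivity

lemma algWeight_sq (a : ℝ) (m : ℕ) (y₀ y : E) :
    algWeight a m y₀ y ^ 2 = algWeight a (2 * m) y₀ y := by
  rw [algWeight, algWeight, inv_pow, ← pow_mul, mul_comm m 2]

lemma algWeight_succ_mul (a : ℝ) (m : ℕ) (y₀ y : E) :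
    algWeight a (m + 1) y₀ y * (1 + a ^ 2 * ‖y - y₀‖ ^ 2) = algWeight a m y₀ y := by
  have hq : 0 < 1 + a ^ 2 * ‖y - y₀‖ ^ 2 := by positivity
  rw [algWeight, algWeight, pow_succ, mul_inv, inv_mul_cancel_right₀ hq.ne']

lemma algWeight_le_inv_pow {a ρ : ℝ} (ha : 0 < a) (hρ : 0 < ρ) (m : ℕ) {y₀ y : E}
    (hy : ρ ≤ ‖y - y₀‖) : algWeight a m y₀ y ≤ ((a * ρ) ^ (2 * m))⁻¹ := by
  rw [algWeight, pow_mul]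
  gcongr
  calc (a * ρ) ^ 2 = a ^ 2 * ρ ^ 2 := mul_pow a ρ 2
    _ ≤ a ^ 2 * ‖y - y₀‖ ^ 2 := by gcongr
    _ ≤ 1 + a ^ 2 * ‖y - y₀‖ ^ 2 := le_add_of_nonneg_left zero_le_one

lemma one_le_two_pow_mul_algWeight {a : ℝ} (ha : 0 ≤ a) (m : ℕ) {y₀ y : E}
    (hy : a * ‖y - y₀‖ ≤ 1) : 1 ≤ 2 ^ m * algWeight a m y₀ y := by
  have hsq : a ^ 2 * ‖y - y₀‖ ^ 2 ≤ 1 := by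
    rw [← mul_pow]
    exact pow_le_one₀ (by positivity) hy
  rw [algWeight, ← div_eq_mul_inv, one_le_div (by positivity)]
  gcongr
  linarith

lemma algSlope_le_div {a ρ s : ℝ} (m : ℕ) (hρ : 0 < ρ) (hs : ρ ≤ s) :
    algSlope a m s ≤ 2 * m / ρ := by
  have hs0 : 0 ≤ s := hρ.le.trans hs
  rw [algSlope, div_le_div_iff₀ (by positivity) hρ]
  calc 2 * m * a ^ 2 * s * ρ ≤ 2 * m * a ^ 2 * s * s := by gcongr
    _ = 2 * m * (a ^ 2 * s ^ 2) := by ring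
    _ ≤ 2 * m * (1 + a ^ 2 * s ^ 2) := by gcongr; exact le_add_of_nonneg_left zero_le_one

/- Where the width `d` is `O(D + s²)`, a weight concentrated at scale `1/a = D/ρ` with `ρ` small
varies slowly compared with the width. -/
lemma algSlope_mul_le {C₀ D a s d : ℝ} (m : ℕ) (hC : 0 ≤ C₀) (hD : 0 ≤ D) (ha : 0 ≤ a)
    (hs : 0 ≤ s) (hsD : s ≤ a * D) (hd : d ≤ 2 * C₀ * (D + s ^ 2)) :
    algSlope a m s * d ≤ 6 * m * C₀ * (a * D) := by
  have hcore : a ^ 2 * s * d ≤ 3 * C₀ * (a * D) * (1 + a ^ 2 * s ^ 2) := by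
    calc a ^ 2 * s * d ≤ a ^ 2 * s * (2 * C₀ * (D + s ^ 2)) := by gcongr
      _ = C₀ * (a * D) * (2 * (a * s)) + 2 * C₀ * (a ^ 2 * s ^ 2) * s := by ring
      _ ≤ C₀ * (a * D) * (1 + a ^ 2 * s ^ 2) + 2 * C₀ * (a ^ 2 * s ^ 2) * (a * D) := by
          gcongr
          nlinarith [sq_nonneg (a * s - 1)]
      _ ≤ 3 * C₀ * (a * D) * (1 + a ^ 2 * s ^ 2) := by
          have : 0 ≤ C₀ * (a * D) := by positivity
          linarith
  calc algSlope a m s * d = 2 * m * (a ^ 2 * s * d) / (1 + a ^ 2 * s ^ 2) := by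
        rw [algSlope]; ring
    _ ≤ 2 * m * (3 * C₀ * (a * D) * (1 + a ^ 2 * s ^ 2)) / (1 + a ^ 2 * s ^ 2) := by gcongr
    _ = 6 * m * C₀ * (a * D) := by field_simp; ring

variable [InnerProductSpace ℝ E]

lemma contDiff_algWeight (a : ℝ) (m : ℕ) (y₀ : E) : ContDiff ℝ 1 (algWeight a m y₀) := by
  refine ContDiff.inv ?_ fun y => by positivity
  exact (contDiff_const.add (contDiff_const.mul
    ((contDiff_id.sub contDiff_const).norm_sq ℝ))).pow m

lemma norm_fderiv_algWeight_le (a : ℝ) (m : ℕ) (y₀ y : E) :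
    ‖fderiv ℝ (algWeight a m y₀) y‖ ≤ algSlope a m ‖y - y₀‖ * algWeight a m y₀ y := by
  set q := 1 + a ^ 2 * ‖y - y₀‖ ^ 2 with hq
  have hq0 : 0 < q := by positivity
  have hinner : HasFDerivAt (fun z : E => 1 + a ^ 2 * ‖z - y₀‖ ^ 2)
      (a ^ 2 • (2 • innerSL ℝ (y - y₀))) y :=
    (((hasFDerivAt_id y).sub_const y₀).norm_sq.const_mul _).const_add 1
  have houter : HasDerivAt (fun s : ℝ => (s ^ m)⁻¹) (-(m * q ^ (m - 1)) / (q ^ m) ^ 2) q :=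
    (hasDerivAt_pow m q).fun_inv (by positivity)
  have hweight : HasFDerivAt (algWeight a m y₀) _ y :=
    HasDerivAt.comp_hasFDerivAt (h₂ := fun s : ℝ => (s ^ m)⁻¹) y houter hinner
  have hnormInner : ‖(2 • innerSL ℝ (y - y₀) : E →L[ℝ] ℝ)‖ ≤ 2 * ‖y - y₀‖ := by
    rw [← Nat.cast_smul_eq_nsmul ℝ, norm_smul, innerSL_apply_norm]
    norm_num
  have hnormOuter : ‖(-(m * q ^ (m - 1)) / (q ^ m) ^ 2 : ℝ)‖ = m / q * (q ^ m)⁻¹ := by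
    rw [norm_div, norm_neg, Real.norm_of_nonneg (by positivity),
      Real.norm_of_nonneg (by positivity)]
    rcases m with _ | m
    · simp
    · rw [Nat.add_sub_cancel]
      field_simp
      exact (pow_succ q m).symm
  rw [hweight.fderiv, norm_smul, norm_smul, hnormOuter, Real.norm_of_nonneg (sq_nonneg a)]
  calc m / q * (q ^ m)⁻¹ * (a ^ 2 * ‖(2 • innerSL ℝ (y - y₀) : E →L[ℝ] ℝ)‖)
      ≤ m / q * (q ^ m)⁻¹ * (a ^ 2 * (2 * ‖y - y₀‖)) := by gcongr
    _ = algSlope a m ‖y - y₀‖ * algWeight a m y₀ y := by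
        rw [algSlope, algWeight, ← hq]
        ring

end AlgebraicWeight

section LocalWeight

/-- A smooth cutoff on the horizontal unit ball, equal to `1` for `|y| ≤ 5/8` and supported in
`|y| ≤ 3/4`. -/
def cutoff (n : ℕ) : ContDiffBump (0 : Ep n) := ⟨5 / 8, 3 / 4, by norm_num, by norm_num⟩

/-- The weight of the energy estimate centred at `y₀`: algebraic decay, cut off before the lateral
boundary, where nothing is known about the solution. -/
def localWeight (n : ℕ) (a : ℝ) (m : ℕ) (y₀ y : Ep n) : ℝ := cutoff n y * algWeight a m y₀ y

variable {n : ℕ}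

lemma cutoff_eq_one {y : Ep n} (hy : ‖y‖ ≤ 5 / 8) : cutoff n y = 1 :=
  (cutoff n).one_of_mem_closedBall (mem_closedBall_zero_iff.2 hy)

lemma fderiv_cutoff_eq_zero {y : Ep n} (hy : ‖y‖ < 5 / 8) : fderiv ℝ (cutoff n) y = 0 := by
  have hconst : (cutoff n : Ep n → ℝ) =ᶠ[𝓝 y] fun _ => 1 := by
    filter_upwards [isOpen_ball.mem_nhds (mem_ball_zero_iff.2 hy)] with z hz
    exact cutoff_eq_one (mem_ball_zero_iff.1 hz).le
  rw [hconst.fderiv_eq, fderiv_const_apply]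

lemma exists_norm_fderiv_cutoff_le (n : ℕ) : ∃ L, ∀ y, ‖fderiv ℝ (cutoff n) y‖ ≤ L :=
  ((cutoff n).hasCompactSupport.fderiv ℝ).exists_bound_of_continuous
    ((cutoff n).contDiff (n := 1).continuous_fderiv one_ne_zero)

variable (a : ℝ) (m : ℕ) (y₀ : Ep n)

lemma contDiff_localWeight : ContDiff ℝ 1 (localWeight n a m y₀) :=
  (cutoff n).contDiff.mul (contDiff_algWeight a m y₀)

lemma norm_le_of_localWeight_ne_zero {y : Ep n} (hy : localWeight n a m y₀ y ≠ 0) :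
    ‖y‖ ≤ 3 / 4 := by
  have hsupp : y ∈ Function.support (cutoff n) := left_ne_zero_of_mul hy
  rw [(cutoff n).support_eq] at hsupp
  exact (mem_ball_zero_iff.1 hsupp).le

lemma localWeight_eq_algWeight {y : Ep n} (hy : ‖y‖ ≤ 5 / 8) :
    localWeight n a m y₀ y = algWeight a m y₀ y := by
  rw [localWeight, cutoff_eq_one hy, one_mul]

lemma localWeight_sq_le (y : Ep n) : localWeight n a m y₀ y ^ 2 ≤ algWeight a (2 * m) y₀ y := by
  rw [localWeight, mul_pow, algWeight_sq]
  exact mul_le_of_le_one_left (algWeight_pos _ _ _ _).le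
    (pow_le_one₀ (cutoff n).nonneg (cutoff n).le_one)

lemma fderiv_localWeight (y : Ep n) : fderiv ℝ (localWeight n a m y₀) y =
    cutoff n y • fderiv ℝ (algWeight a m y₀) y + algWeight a m y₀ y • fderiv ℝ (cutoff n) y :=
  fderiv_mul ((cutoff n).contDiff.differentiable one_ne_zero y)
    ((contDiff_algWeight a m y₀).differentiable one_ne_zero y)

variable {L : ℝ} (hL : ∀ y, ‖fderiv ℝ (cutoff n) y‖ ≤ L)
include hL

lemma norm_fderiv_localWeight_le (y : Ep n) : ‖fderiv ℝ (localWeight n a m y₀) y‖ ≤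
    (algSlope a m ‖y - y₀‖ + L) * algWeight a m y₀ y := by
  have hpos := algWeight_pos a m y₀ y
  have hfirst : cutoff n y * ‖fderiv ℝ (algWeight a m y₀) y‖ ≤
      algSlope a m ‖y - y₀‖ * algWeight a m y₀ y :=
    (mul_le_of_le_one_left (norm_nonneg _) (cutoff n).le_one).trans
      (norm_fderiv_algWeight_le a m y₀ y)
  rw [fderiv_localWeight]
  refine (norm_add_le _ _).trans ?_
  rw [norm_smul, norm_smul, Real.norm_of_nonneg (cutoff n).nonneg, Real.norm_of_nonneg hpos.le,
    add_mul, mul_comm L]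
  exact add_le_add hfirst (mul_le_mul_of_nonneg_left (hL y) hpos.le)

lemma norm_fderiv_localWeight_le_far {ρ : ℝ} (ha : 0 < a) (hρ : 0 < ρ) {y : Ep n}
    (hy : ρ ≤ ‖y - y₀‖) :
    ‖fderiv ℝ (localWeight n a m y₀) y‖ ≤ (2 * m / ρ + L) * ((a * ρ) ^ (2 * m))⁻¹ := by
  have hL0 : 0 ≤ L := (norm_nonneg _).trans (hL 0)
  refine (norm_fderiv_localWeight_le a m y₀ hL y).trans ?_
  exact mul_le_mul (by gcongr; exact algSlope_le_div m hρ hy) (algWeight_le_inv_pow ha hρ m hy)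
    (algWeight_pos _ _ _ _).le (by positivity)

end LocalWeight

lemma add_norm_sq_le_two_mul {E : Type*} [SeminormedAddCommGroup E] {ε : ℝ} (hε : 0 ≤ ε)
    (y₀ y : E) : ε + ‖y‖ ^ 2 ≤ 2 * (ε + ‖y₀‖ ^ 2 + ‖y - y₀‖ ^ 2) := by
  have hsq : ‖y‖ ^ 2 ≤ (‖y₀‖ + ‖y - y₀‖) ^ 2 := by
    gcongr
    exact norm_le_norm_add_norm_sub' y y₀
  nlinarith [sq_nonneg (‖y₀‖ - ‖y - y₀‖)]

namespace NarrowGap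

variable {n : ℕ} {ε κ C₀ : ℝ} {h1 h2 : Ep n → ℝ} (hg : NarrowGap n ε κ C₀ h1 h2) (y₀ : Ep n)

include hg

lemma gap_le_center {y : Ep n} (hy : ‖y‖ ≤ 1) :
    gap ε h1 h2 y ≤ 2 * C₀ * (ε + ‖y₀‖ ^ 2 + ‖y - y₀‖ ^ 2) := by
  have hC₀ := hg.const_pos
  calc gap ε h1 h2 y ≤ C₀ * (ε + ‖y‖ ^ 2) := hg.gap_le hy
    _ ≤ C₀ * (2 * (ε + ‖y₀‖ ^ 2 + ‖y - y₀‖ ^ 2)) := by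
        gcongr
        exact add_norm_sq_le_two_mul hg.eps_pos.le y₀ y
    _ = 2 * C₀ * (ε + ‖y₀‖ ^ 2 + ‖y - y₀‖ ^ 2) := by ring

variable {y₀} {D ρ : ℝ} {m : ℕ} (hD : D = ε + ‖y₀‖ ^ 2) (hy₀ : ‖y₀‖ ≤ 1 / 2) (hρ : 0 < ρ)
  (hρ16 : ρ ≤ 1 / 16) (hsmall : 24 * n * m * C₀ * ρ ≤ 1)
include hD

lemma scale_pos : 0 < D := by
  rw [hD]
  exact add_pos_of_pos_of_nonneg hg.eps_pos (sq_nonneg _)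

include hy₀ hρ hρ16 hsmall

lemma norm_fderiv_localWeight_le_near {y : Ep n} (hy : ‖y - y₀‖ ≤ ρ) :
    4 * n * ‖fderiv ℝ (localWeight n (ρ / D) m y₀) y‖ ≤
      localWeight n (ρ / D) m y₀ y / gap ε h1 h2 y := by
  have hD0 := hg.scale_pos hD
  have hyNorm : ‖y‖ < 5 / 8 := by linarith [norm_le_norm_add_norm_sub' y y₀]
  have hgap := hg.gap_pos (y := y) (by linarith)
  have hslope : algSlope (ρ / D) m ‖y - y₀‖ * gap ε h1 h2 y ≤ 6 * m * C₀ * ρ := by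
    have haD : ρ / D * D = ρ := div_mul_cancel₀ ρ hD0.ne'
    have := algSlope_mul_le m hg.const_pos.le hD0.le (div_pos hρ hD0).le (norm_nonneg (y - y₀))
      (haD.symm ▸ hy) (hD ▸ hg.gap_le_center y₀ (y := y) (by linarith))
    rwa [haD] at this
  rw [localWeight_eq_algWeight _ _ _ hyNorm.le, fderiv_localWeight, fderiv_cutoff_eq_zero hyNorm,
    cutoff_eq_one hyNorm.le, smul_zero, add_zero, one_smul, le_div_iff₀ hgap]
  have hweight := algWeight_pos (ρ / D) m y₀ y
  calc 4 * n * ‖fderiv ℝ (algWeight (ρ / D) m y₀) y‖ * gap ε h1 h2 y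
      ≤ 4 * n * (algSlope (ρ / D) m ‖y - y₀‖ * algWeight (ρ / D) m y₀ y) * gap ε h1 h2 y := by
        gcongr
        exact norm_fderiv_algWeight_le _ _ _ _
    _ = 4 * n * (algSlope (ρ / D) m ‖y - y₀‖ * gap ε h1 h2 y) * algWeight (ρ / D) m y₀ y := by ring
    _ ≤ 4 * n * (6 * m * C₀ * ρ) * algWeight (ρ / D) m y₀ y := by gcongr
    _ = 24 * n * m * C₀ * ρ * algWeight (ρ / D) m y₀ y := by ring
    _ ≤ algWeight (ρ / D) m y₀ y := mul_le_of_le_one_left hweight.le hsmall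

lemma norm_fderiv_localWeight_sq_le {L : ℝ} (hL : ∀ y, ‖fderiv ℝ (cutoff n) y‖ ≤ L) (y : Ep n) :
    n * ‖fderiv ℝ (localWeight n (ρ / D) m y₀) y‖ ^ 2 ≤
      1 / 16 * (localWeight n (ρ / D) m y₀ y / gap ε h1 h2 y) ^ 2 +
        n * ((2 * m / ρ + L) * ((ρ / D * ρ) ^ (2 * m))⁻¹) ^ 2 := by
  have hD0 := hg.scale_pos hD
  rcases le_total ‖y - y₀‖ ρ with hy | hy
  · refine le_add_of_le_of_nonneg ?_ (by positivity)
    have hnn : (n : ℝ) ≤ n ^ 2 := by exact_mod_cast Nat.le_self_pow two_ne_zero n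
    calc n * ‖fderiv ℝ (localWeight n (ρ / D) m y₀) y‖ ^ 2
        ≤ n ^ 2 * ‖fderiv ℝ (localWeight n (ρ / D) m y₀) y‖ ^ 2 := by gcongr
      _ = 1 / 16 * (4 * n * ‖fderiv ℝ (localWeight n (ρ / D) m y₀) y‖) ^ 2 := by ring
      _ ≤ 1 / 16 * (localWeight n (ρ / D) m y₀ y / gap ε h1 h2 y) ^ 2 := by
          gcongr
          exact hg.norm_fderiv_localWeight_le_near hD hy₀ hρ hρ16 hsmall hy
  · refine le_add_of_nonneg_of_le (by positivity) ?_
    gcongr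
    exact norm_fderiv_localWeight_le_far _ m y₀ hL (div_pos hρ hD0) hρ hy

end NarrowGap

/-! ### Integrals over the narrow region -/

section Integrals

lemma setLIntegral_Omega_comp_fst {n : ℕ} {ε r : ℝ} {h1 h2 : Ep n → ℝ}
    (hΩ : MeasurableSet (Omega n ε h1 h2 r)) {f : Ep n → ENNReal} (hf : Measurable f) :
    ∫⁻ x in Omega n ε h1 h2 r, f x.1 =
      ∫⁻ y in ball 0 r, f y * ENNReal.ofReal (gap ε h1 h2 y) := by
  rw [← lintegral_indicator hΩ, ← lintegral_indicator measurableSet_ball, Measure.volume_eq_prod,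
    lintegral_prod (fun x : Efull n => (Omega n ε h1 h2 r).indicator (fun x => f x.1) x)
      ((hf.comp measurable_fst).indicator hΩ).aemeasurable]
  refine lintegral_congr fun y => ?_
  by_cases hy : ‖y‖ < r
  · have hslice : (fun t : ℝ => (Omega n ε h1 h2 r).indicator (fun x => f x.1) (y, t)) =
        (Set.Ioo (-ε / 2 + h2 y) (ε / 2 + h1 y)).indicator fun _ => f y := by
      funext t
      exact Set.indicator_eq_indicator ⟨fun h => h.2, fun h => ⟨hy, h⟩⟩ rfl
    rw [hslice, lintegral_indicator measurableSet_Ioo, setLIntegral_const, Real.volume_Ioo,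
      Set.indicator_of_mem (mem_ball_zero_iff.2 hy)]
    congr 2
    rw [gap]
    ring
  · rw [Set.indicator_of_notMem fun h => hy (mem_ball_zero_iff.1 h), ← lintegral_zero]
    exact lintegral_congr fun t => Set.indicator_of_notMem (fun h => hy h.1) _

lemma setIntegral_Omega_le {n : ℕ} {ε r : ℝ} {h1 h2 F G : Ep n → ℝ} {q : Efull n → ℝ}
    (hΩ : MeasurableSet (Omega n ε h1 h2 r))
    (hqm : AEStronglyMeasurable q (volume.restrict (Omega n ε h1 h2 r)))
    (hq0 : ∀ x ∈ Omega n ε h1 h2 r, 0 ≤ q x) (hqF : ∀ x ∈ Omega n ε h1 h2 r, q x ≤ F x.1)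
    (hF : Measurable F) (hF0 : ∀ y, 0 ≤ F y) (hG : Integrable G) (hG0 : ∀ y, 0 ≤ G y)
    (hFG : ∀ y, ‖y‖ < r → F y * gap ε h1 h2 y ≤ G y) :
    ∫ x in Omega n ε h1 h2 r, q x ≤ ∫ y, G y := by
  rw [integral_eq_lintegral_of_nonneg_ae ((ae_restrict_iff' hΩ).2 (.of_forall hq0)) hqm,
    integral_eq_lintegral_of_nonneg_ae (.of_forall hG0) hG.1]
  refine ENNReal.toReal_mono hG.lintegral_lt_top.ne ?_
  calc ∫⁻ x in Omega n ε h1 h2 r, ENNReal.ofReal (q x)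
      ≤ ∫⁻ x in Omega n ε h1 h2 r, ENNReal.ofReal (F x.1) :=
        setLIntegral_mono' hΩ fun x hx => ENNReal.ofReal_le_ofReal (hqF x hx)
    _ = ∫⁻ y in ball 0 r, ENNReal.ofReal (F y) * ENNReal.ofReal (gap ε h1 h2 y) :=
        setLIntegral_Omega_comp_fst hΩ hF.ennreal_ofReal
    _ ≤ ∫⁻ y in ball 0 r, ENNReal.ofReal (G y) := by
        refine setLIntegral_mono' measurableSet_ball fun y hy => ?_
        rw [← ENNReal.ofReal_mul (hF0 y)]
        exact ENNReal.ofReal_le_ofReal (hFG y (mem_ball_zero_iff.1 hy))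
    _ ≤ ∫⁻ y, ENNReal.ofReal (G y) := setLIntegral_le_lintegral _ _

variable {E : Type*} [NormedAddCommGroup E]

lemma algWeight_eq_comp_smul [NormedSpace ℝ E] (a : ℝ) (m : ℕ) (y₀ : E) :
    algWeight a m y₀ = fun y => algWeight 1 m 0 (a • (y - y₀)) := by
  funext y
  simp only [algWeight, sub_zero, norm_smul, mul_pow, Real.norm_eq_abs, sq_abs, one_pow, one_mul]

variable [InnerProductSpace ℝ E] [FiniteDimensional ℝ E] [MeasurableSpace E] [BorelSpace E]
  {a : ℝ} {m : ℕ}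

lemma integrable_algWeight (ha : a ≠ 0) (hm : Module.finrank ℝ E < 2 * m) (y₀ : E) :
    Integrable (algWeight a m y₀) := by
  have hunit : Integrable (algWeight 1 m (0 : E)) := by
    refine (integrable_rpow_neg_one_add_norm_sq (μ := volume) (r := 2 * m)
      (by exact_mod_cast hm)).congr (.of_forall fun z => ?_)
    have hexp : -(2 * m : ℝ) / 2 = -(m : ℝ) := by ring
    simp only [hexp, algWeight, sub_zero, one_pow, one_mul]
    rw [Real.rpow_neg (by positivity), Real.rpow_natCast]
  rw [algWeight_eq_comp_smul]
  exact (hunit.comp_smul ha).comp_sub_right y₀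

lemma integral_algWeight (ha : 0 < a) (m : ℕ) (y₀ : E) :
    ∫ y, algWeight a m y₀ y = (a ^ Module.finrank ℝ E)⁻¹ * ∫ z : E, algWeight 1 m 0 z := by
  rw [algWeight_eq_comp_smul a m y₀,
    integral_sub_right_eq_self (fun y => algWeight 1 m (0 : E) (a • y)) y₀,
    Measure.integral_comp_smul, smul_eq_mul, abs_of_pos (by positivity)]

end Integrals

/-! ### The source term -/

/-- The constant in the pointwise bound of the source `δ Δũ`. -/
def sourceConst (n : ℕ) (κ C₀ : ℝ) : ℝ :=
  3 * n ^ 2 * (4 * C₀ ^ 2 + 8 * κ ^ 2 + 2 * (κ + 2 * κ ^ 2 * C₀) ^ 2)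

lemma sourceConst_nonneg (n : ℕ) (κ C₀ : ℝ) : 0 ≤ sourceConst n κ C₀ := by
  unfold sourceConst
  positivity

lemma add_add_sq_le (a b c : ℝ) : (a + b + c) ^ 2 ≤ 3 * (a ^ 2 + b ^ 2 + c ^ 2) := by
  linarith [sq_nonneg (a - b), sq_nonneg (a - c), sq_nonneg (b - c)]

lemma sub_sq_le_of_C2norm {n : ℕ} {φ ψ : Ep n → ℝ} (hφ : ContDiffOn ℝ 2 φ (closedBall 0 1))
    (hψ : ContDiffOn ℝ 2 ψ (closedBall 0 1)) {y₀ y : Ep n} (hy₀ : ‖y₀‖ < 1) (hy : ‖y‖ < 1) :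
    (φ y - ψ y) ^ 2 ≤ 2 * (|φ y₀ - ψ y₀| ^ 2 +
      (C2norm n φ + C2norm n ψ) ^ 2 * ‖y - y₀‖ ^ 2) := by
  have hjump : |φ y - ψ y| ≤ |φ y₀ - ψ y₀| + (C2norm n φ + C2norm n ψ) * ‖y - y₀‖ := by
    have hφ' := norm_sub_le_C2norm_mul hφ hy₀ hy
    have hψ' := norm_sub_le_C2norm_mul hψ hy₀ hy
    rw [Real.norm_eq_abs] at hφ' hψ'
    have hsplit : φ y - ψ y = φ y₀ - ψ y₀ + (φ y - φ y₀) - (ψ y - ψ y₀) := by ring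
    rw [hsplit]
    linarith [abs_sub (φ y₀ - ψ y₀ + (φ y - φ y₀)) (ψ y - ψ y₀),
      abs_add_le (φ y₀ - ψ y₀) (φ y - φ y₀)]
  calc (φ y - ψ y) ^ 2 = |φ y - ψ y| ^ 2 := (sq_abs _).symm
    _ ≤ (|φ y₀ - ψ y₀| + (C2norm n φ + C2norm n ψ) * ‖y - y₀‖) ^ 2 := by gcongr
    _ ≤ _ := by rw [← mul_pow]; exact add_sq_le

namespace NarrowGap

variable {n : ℕ} {ε κ C₀ : ℝ} {h1 h2 φ ψ : Ep n → ℝ} (hg : NarrowGap n ε κ C₀ h1 h2)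
  (hε : ε ≤ 1)
include hg hε

lemma gap_sq_le (y₀ : Ep n) {y : Ep n} (hy : ‖y‖ ≤ 1) :
    gap ε h1 h2 y ^ 2 ≤ 4 * C₀ ^ 2 * (ε + ‖y₀‖ ^ 2 + ‖y - y₀‖ ^ 2) := by
  have hC₀ := hg.const_pos
  have hbounded : gap ε h1 h2 y ≤ C₀ * 2 := by
    refine (hg.gap_le hy).trans ?_
    gcongr
    linarith [pow_le_one₀ (n := 2) (norm_nonneg y) hy]
  calc gap ε h1 h2 y ^ 2 = gap ε h1 h2 y * gap ε h1 h2 y := sq _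
    _ ≤ C₀ * 2 * (2 * C₀ * (ε + ‖y₀‖ ^ 2 + ‖y - y₀‖ ^ 2)) :=
        mul_le_mul hbounded (hg.gap_le_center y₀ hy) (hg.gap_pos hy).le (by positivity)
    _ = _ := by ring

variable (hφ : ContDiffOn ℝ 2 φ (closedBall 0 1)) (hψ : ContDiffOn ℝ 2 ψ (closedBall 0 1))
include hφ hψ

lemma sq_gap_mul_lapl_util_le {y₀ : Ep n} (hy₀ : ‖y₀‖ < 1) {x : Efull n}
    (hx : x ∈ Omega n ε h1 h2 1) :
    (gap ε h1 h2 x.1 * lapl n (util n ε h1 h2 φ ψ) x) ^ 2 ≤ sourceConst n κ C₀ *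
      (|φ y₀ - ψ y₀| ^ 2 +
        (C2norm n φ + C2norm n ψ) ^ 2 * (ε + ‖y₀‖ ^ 2 + ‖x.1 - y₀‖ ^ 2)) := by
  have hx1 : ‖x.1‖ < 1 := hx.1
  have hgap := hg.gap_pos hx1.le
  have hlapl := hg.gap_mul_abs_lapl_util_le hφ hψ hx
  have hwidth := hg.gap_sq_le hε y₀ hx1.le
  have hjump := sub_sq_le_of_C2norm hφ hψ hy₀ hx1
  have hε0 := hg.eps_pos
  have hnorm : ‖x.1‖ ^ 2 ≤ 2 * (ε + ‖y₀‖ ^ 2 + ‖x.1 - y₀‖ ^ 2) := by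
    linarith [add_norm_sq_le_two_mul hε0.le y₀ x.1]
  set T := ε + ‖y₀‖ ^ 2 + ‖x.1 - y₀‖ ^ 2
  set M := C2norm n φ + C2norm n ψ
  set P := |φ y₀ - ψ y₀|
  set c := κ + 2 * κ ^ 2 * C₀
  have hsT : ‖x.1 - y₀‖ ^ 2 ≤ T := le_add_of_nonneg_left (by positivity)
  calc (gap ε h1 h2 x.1 * lapl n (util n ε h1 h2 φ ψ) x) ^ 2
      = (gap ε h1 h2 x.1 * |lapl n (util n ε h1 h2 φ ψ) x|) ^ 2 := by
        rw [mul_pow, mul_pow, sq_abs]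
    _ ≤ (n * (M * (gap ε h1 h2 x.1 + 2 * κ * ‖x.1‖) + |φ x.1 - ψ x.1| * c)) ^ 2 := by gcongr
    _ = n ^ 2 * (M * gap ε h1 h2 x.1 + M * (2 * κ * ‖x.1‖) + |φ x.1 - ψ x.1| * c) ^ 2 := by ring
    _ ≤ n ^ 2 * (3 * ((M * gap ε h1 h2 x.1) ^ 2 + (M * (2 * κ * ‖x.1‖)) ^ 2 +
          (|φ x.1 - ψ x.1| * c) ^ 2)) := by gcongr; exact add_add_sq_le _ _ _
    _ = 3 * n ^ 2 * (M ^ 2 * gap ε h1 h2 x.1 ^ 2 + 4 * κ ^ 2 * (M ^ 2 * ‖x.1‖ ^ 2) +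
          c ^ 2 * (φ x.1 - ψ x.1) ^ 2) := by rw [mul_pow |_| c, sq_abs]; ring
    _ ≤ 3 * n ^ 2 * (M ^ 2 * (4 * C₀ ^ 2 * T) + 4 * κ ^ 2 * (M ^ 2 * (2 * T)) +
          c ^ 2 * (2 * (P ^ 2 + M ^ 2 * T))) := by
        gcongr
        exact hjump.trans (by gcongr)
    _ ≤ 3 * n ^ 2 * (4 * C₀ ^ 2 * (P ^ 2 + M ^ 2 * T) + 8 * κ ^ 2 * (P ^ 2 + M ^ 2 * T) +
          c ^ 2 * (2 * (P ^ 2 + M ^ 2 * T))) := by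
        gcongr ?_ * (?_ + ?_ + _)
        · nlinarith [mul_nonneg (sq_nonneg C₀) (sq_nonneg P)]
        · nlinarith [mul_nonneg (sq_nonneg κ) (sq_nonneg P)]
    _ = sourceConst n κ C₀ * (P ^ 2 + M ^ 2 * T) := by rw [sourceConst]; ring

end NarrowGap

/-! ### The local energy estimate -/

section Scalar

variable {n : ℕ} {ρ D : ℝ}

lemma one_le_two_div_sq (hρ : 0 < ρ) (hρ1 : ρ ≤ 1) : 1 ≤ 2 / ρ ^ 2 := by
  rw [one_le_div (by positivity)]
  linarith [pow_le_one₀ (n := 2) hρ.le hρ1]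

lemma add_sq_le_mul_one_add_sq (hρ : 0 < ρ) (hρ1 : ρ ≤ 1) (hD : 0 < D) (hD2 : D ≤ 2) (s : ℝ) :
    D + s ^ 2 ≤ 2 / ρ ^ 2 * D * (1 + (ρ / D) ^ 2 * s ^ 2) := by
  have hexpand : 2 / ρ ^ 2 * D * (1 + (ρ / D) ^ 2 * s ^ 2) = 2 / ρ ^ 2 * D + 2 / D * s ^ 2 := by
    field_simp
  rw [hexpand]
  exact add_le_add (le_mul_of_one_le_left hD.le (one_le_two_div_sq hρ hρ1))
    (le_mul_of_one_le_left (sq_nonneg s) ((one_le_div hD).2 hD2))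

lemma tail_eq (ρ D N b : ℝ) (m : ℕ) :
    N * (b * ((ρ / D * ρ) ^ (2 * m))⁻¹) ^ 2 = N * (b / ρ ^ (4 * m)) ^ 2 * D ^ (4 * m) := by
  have hpow : ((ρ / D * ρ) ^ (2 * m))⁻¹ = D ^ (2 * m) / ρ ^ (4 * m) := by
    rw [div_mul_eq_mul_div, div_pow, inv_div, ← sq, ← pow_mul, ← mul_assoc,
      show 2 * 2 * m = 4 * m by norm_num]
  rw [hpow, show 4 * m = 2 * m * 2 by ring, pow_mul D]
  ring

lemma mul_inv_div_pow_pred (hn : 0 < n) (ρ D : ℝ) :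
    D * ((ρ / D) ^ (n - 1))⁻¹ = D ^ n / ρ ^ (n - 1) := by
  obtain ⟨k, rfl⟩ := Nat.exists_eq_succ_of_ne_zero hn.ne'
  rw [Nat.succ_sub_one, div_pow, inv_div, Nat.succ_eq_add_one, pow_succ']
  ring

/- The tail of the weight costs `D ^ (4n + 4)`, far more than the factor `D ^ (n + 1)` claimed. -/
lemma tail_add_source_le {T S A P F G : ℝ} (hT : 0 ≤ T) (hS : 0 ≤ S) (hD : 0 ≤ D) (hD2 : D ≤ 2)
    (hA : 0 ≤ A) :
    T * D ^ (4 * (n + 1)) * A + S * D ^ n * (P ^ 2 + (F + G) ^ 2 * D) ≤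
      (T * 2 ^ (3 * n + 3) + 2 * S) * D ^ n * (P ^ 2 + D * (A + F ^ 2 + G ^ 2)) := by
  set R := P ^ 2 + D * (A + F ^ 2 + G ^ 2) with hR
  have hDF : 0 ≤ D * (F ^ 2 + G ^ 2) := by positivity
  have hDA : 0 ≤ D * A := by positivity
  have htail : D ^ (4 * (n + 1)) * A ≤ 2 ^ (3 * n + 3) * D ^ n * R := by
    calc D ^ (4 * (n + 1)) * A = D ^ (3 * n + 3) * D ^ n * (D * A) := by ring
      _ ≤ 2 ^ (3 * n + 3) * D ^ n * R := by
          gcongr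
          rw [hR]
          linarith [sq_nonneg P]
  have hsource : P ^ 2 + (F + G) ^ 2 * D ≤ 2 * R := by
    calc P ^ 2 + (F + G) ^ 2 * D ≤ P ^ 2 + 2 * (F ^ 2 + G ^ 2) * D := by
          gcongr
          exact add_sq_le
      _ ≤ 2 * R := by rw [hR]; linarith [sq_nonneg P]
  calc T * D ^ (4 * (n + 1)) * A + S * D ^ n * (P ^ 2 + (F + G) ^ 2 * D)
      = T * (D ^ (4 * (n + 1)) * A) + S * D ^ n * (P ^ 2 + (F + G) ^ 2 * D) := by ring
    _ ≤ T * (2 ^ (3 * n + 3) * D ^ n * R) + S * D ^ n * (2 * R) := by gcongr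
    _ = (T * 2 ^ (3 * n + 3) + 2 * S) * D ^ n * R := by ring

end Scalar

lemma measurableSet_OmegaHat {n : ℕ} {ε : ℝ} {h1 h2 : Ep n → ℝ}
    (hh1 : ContinuousOn h1 (closedBall 0 1)) (hh2 : ContinuousOn h2 (closedBall 0 1))
    (x₀ : Efull n) (s : ℝ) : MeasurableSet (OmegaHat n ε h1 h2 x₀ s) :=
  ((isOpen_Omega hh1 hh2 (by norm_num)).inter
    (isOpen_lt (by fun_prop : Continuous fun x : Efull n => ‖x.1 - x₀.1‖)
      continuous_const)).measurableSet

lemma OmegaHat_subset_Omega {n : ℕ} {ε : ℝ} {h1 h2 : Ep n → ℝ} (x₀ : Efull n) (s : ℝ) :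
    OmegaHat n ε h1 h2 x₀ s ⊆ Omega n ε h1 h2 1 :=
  fun _ hx => ⟨hx.1.1.trans (by norm_num), hx.1.2⟩

lemma norm_sq_le_localWeight_mul {n m : ℕ} {a : ℝ} {y₀ y : Ep n} (hn : 0 < n) (ha : 0 ≤ a)
    (hy : ‖y‖ ≤ 5 / 8) (hay : a * ‖y - y₀‖ ≤ 1) (L : Efull n →L[ℝ] ℝ) :
    ‖L‖ ^ 2 ≤ n * 4 ^ m * ∑ α, (localWeight n a m y₀ y * L (dir n α)) ^ 2 := by
  have hweight : 1 ≤ 4 ^ m * localWeight n a m y₀ y ^ 2 := by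
    have h := one_le_pow₀ (n := 2) (one_le_two_pow_mul_algWeight ha m hay)
    rwa [mul_pow, ← pow_mul, mul_comm m, pow_mul, ← localWeight_eq_algWeight a m y₀ hy,
      (by norm_num : (2 : ℝ) ^ 2 = 4)] at h
  calc ‖L‖ ^ 2 ≤ n * ∑ α, L (dir n α) ^ 2 := norm_sq_le_sum_dir_sq hn L
    _ ≤ n * ∑ α, 4 ^ m * localWeight n a m y₀ y ^ 2 * L (dir n α) ^ 2 := by
        gcongr with α
        exact le_mul_of_one_le_left (sq_nonneg _) hweight
    _ = n * 4 ^ m * ∑ α, (localWeight n a m y₀ y * L (dir n α)) ^ 2 := by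
        simp only [mul_assoc, mul_pow, Finset.mul_sum]

lemma VanishesOnGraphs.setIntegral_OmegaHat_le {n m : ℕ} {ε a s : ℝ} {h1 h2 : Ep n → ℝ}
    {w : Efull n → ℝ} (hw : VanishesOnGraphs n ε h1 h2 w) (hg : SmoothGap n ε h1 h2) (hn : 0 < n)
    (ha : 0 ≤ a) (has : a * s ≤ 1) (x₀ : Efull n) :
    ∫ x in OmegaHat n ε h1 h2 x₀ s, ‖fderiv ℝ w x‖ ^ 2 ≤ n * 4 ^ m *
      ∫ x in Omega n ε h1 h2 1, ∑ α, (localWeight n a m x₀.1 x.1 * fderiv ℝ w x (dir n α)) ^ 2 := by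
  have hInt : IntegrableOn
      (fun x => ∑ α, (localWeight n a m x₀.1 x.1 * fderiv ℝ w x (dir n α)) ^ 2)
      (Omega n ε h1 h2 1) := integrable_finsetSum _ fun α _ =>
    hw.integrableOn_weight_fderiv_sq hg (contDiff_localWeight a m x₀.1) (dir n α)
  have hmeas : MeasurableSet (OmegaHat n ε h1 h2 x₀ s) :=
    measurableSet_OmegaHat hg.smooth_top.continuousOn hg.smooth_bot.continuousOn x₀ s
  have hsub : OmegaHat n ε h1 h2 x₀ s ⊆ Omega n ε h1 h2 1 := OmegaHat_subset_Omega x₀ s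
  rw [← integral_const_mul]
  calc ∫ x in OmegaHat n ε h1 h2 x₀ s, ‖fderiv ℝ w x‖ ^ 2
      ≤ ∫ x in OmegaHat n ε h1 h2 x₀ s, n * 4 ^ m *
          ∑ α, (localWeight n a m x₀.1 x.1 * fderiv ℝ w x (dir n α)) ^ 2 := by
        refine integral_mono_of_nonneg (.of_forall fun x => by positivity)
          ((hInt.mono_set hsub).const_mul _) ((ae_restrict_mem hmeas).mono fun x hx => ?_)
        exact norm_sq_le_localWeight_mul hn ha (hx.1.1.le.trans (by norm_num))
          ((mul_le_mul_of_nonneg_left hx.2.le ha).trans has) _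
    _ ≤ ∫ x in Omega n ε h1 h2 1, n * 4 ^ m *
          ∑ α, (localWeight n a m x₀.1 x.1 * fderiv ℝ w x (dir n α)) ^ 2 :=
        setIntegral_mono_set (hInt.const_mul _) (.of_forall fun x => by positivity)
          hsub.eventuallyLE

lemma sq_localWeight_mul_le {n k : ℕ} {a b c D K P M q : ℝ} {y₀ y : Ep n} (hc : 1 ≤ c)
    (hK : 0 ≤ K) (hb : D + b ≤ c * D * (1 + a ^ 2 * ‖y - y₀‖ ^ 2))
    (hq : q ^ 2 ≤ K * (P ^ 2 + M ^ 2 * (D + b))) :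
    (localWeight n a (k + 1) y₀ y * q) ^ 2 ≤
      K * c * (P ^ 2 + M ^ 2 * D) * algWeight a (2 * k + 1) y₀ y := by
  set t := 1 + a ^ 2 * ‖y - y₀‖ ^ 2 with ht
  have ht1 : 1 ≤ t := by rw [ht]; linarith [mul_nonneg (sq_nonneg a) (sq_nonneg ‖y - y₀‖)]
  have hgrowth : P ^ 2 + M ^ 2 * (D + b) ≤ c * t * (P ^ 2 + M ^ 2 * D) :=
    calc P ^ 2 + M ^ 2 * (D + b) ≤ c * t * P ^ 2 + M ^ 2 * (c * D * t) := by
          gcongr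
          exact le_mul_of_one_le_left (sq_nonneg P) (one_le_mul_of_one_le_of_one_le hc ht1)
      _ = c * t * (P ^ 2 + M ^ 2 * D) := by ring
  calc (localWeight n a (k + 1) y₀ y * q) ^ 2
      = localWeight n a (k + 1) y₀ y ^ 2 * q ^ 2 := mul_pow _ _ _
    _ ≤ algWeight a (2 * (k + 1)) y₀ y * (K * (c * t * (P ^ 2 + M ^ 2 * D))) :=
        mul_le_mul (localWeight_sq_le a (k + 1) y₀ y) (hq.trans (by gcongr)) (sq_nonneg q)
          (algWeight_pos _ _ _ _).le
    _ = K * c * (P ^ 2 + M ^ 2 * D) * (algWeight a (2 * k + 1 + 1) y₀ y * t) := by ring_nf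
    _ = K * c * (P ^ 2 + M ^ 2 * D) * algWeight a (2 * k + 1) y₀ y := by
        rw [algWeight_succ_mul]

/-- The constant in front of `D ^ n` in the weighted square integral of the source, at scale `ρ`. -/
def massConst (n : ℕ) (κ C₀ ρ : ℝ) : ℝ :=
  2 * C₀ * sourceConst n κ C₀ * (2 / ρ ^ 2) ^ 2 * (∫ z : Ep n, algWeight 1 (2 * n) 0 z) /
    ρ ^ (n - 1)

lemma massConst_nonneg {C₀ ρ : ℝ} (n : ℕ) (κ : ℝ) (hC₀ : 0 ≤ C₀) (hρ : 0 ≤ ρ) :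
    0 ≤ massConst n κ C₀ ρ := by
  have hK := sourceConst_nonneg n κ C₀
  have hJ : 0 ≤ ∫ z : Ep n, algWeight 1 (2 * n) 0 z :=
    integral_nonneg fun z => (algWeight_pos _ _ _ _).le
  unfold massConst
  positivity

namespace NarrowGap

variable {n : ℕ} {ε κ C₀ ρ D : ℝ} {h1 h2 : Ep n → ℝ} {y₀ : Ep n}
  (hg : NarrowGap n ε κ C₀ h1 h2) (hD : D = ε + ‖y₀‖ ^ 2) (hD2 : D ≤ 2)
  (hρ : 0 < ρ) (hρ1 : ρ ≤ 1)
include hg hD hD2 hρ hρ1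

lemma algWeight_succ_mul_gap_le (m : ℕ) {y : Ep n} (hy : ‖y‖ ≤ 1) :
    algWeight (ρ / D) (m + 1) y₀ y * gap ε h1 h2 y ≤
      2 * C₀ * (2 / ρ ^ 2) * D * algWeight (ρ / D) m y₀ y := by
  have hC₀ := hg.const_pos
  have hweight := (algWeight_pos (ρ / D) (m + 1) y₀ y).le
  calc algWeight (ρ / D) (m + 1) y₀ y * gap ε h1 h2 y
      ≤ algWeight (ρ / D) (m + 1) y₀ y *
          (2 * C₀ * (2 / ρ ^ 2 * D * (1 + (ρ / D) ^ 2 * ‖y - y₀‖ ^ 2))) := by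
        gcongr
        refine (hg.gap_le_center y₀ hy).trans ?_
        rw [← hD]
        gcongr
        exact add_sq_le_mul_one_add_sq hρ hρ1 (hg.scale_pos hD) hD2 _
    _ = 2 * C₀ * (2 / ρ ^ 2) * D *
          (algWeight (ρ / D) (m + 1) y₀ y * (1 + (ρ / D) ^ 2 * ‖y - y₀‖ ^ 2)) := by ring
    _ = 2 * C₀ * (2 / ρ ^ 2) * D * algWeight (ρ / D) m y₀ y := by rw [algWeight_succ_mul]

/- The weight confines `y` to the ball of radius `≈ D` about `y₀`, where the gap has width `≈ D`, so
the volume is `≈ D ^ n`. -/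
lemma setIntegral_sq_localWeight_mul_le (hn : 0 < n) {P M : ℝ} {q : Efull n → ℝ}
    (hq : ∀ x ∈ Omega n ε h1 h2 1,
      q x ^ 2 ≤ sourceConst n κ C₀ * (P ^ 2 + M ^ 2 * (D + ‖x.1 - y₀‖ ^ 2)))
    (hInt : IntegrableOn (fun x => (localWeight n (ρ / D) (n + 1) y₀ x.1 * q x) ^ 2)
      (Omega n ε h1 h2 1)) :
    ∫ x in Omega n ε h1 h2 1, (localWeight n (ρ / D) (n + 1) y₀ x.1 * q x) ^ 2 ≤
      massConst n κ C₀ ρ * D ^ n * (P ^ 2 + M ^ 2 * D) := by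
  have hD0 := hg.scale_pos hD
  have hC₀ := hg.const_pos
  have ha : 0 < ρ / D := div_pos hρ hD0
  have hK := sourceConst_nonneg n κ C₀
  have hfinrank : Module.finrank ℝ (Ep n) = n - 1 := finrank_euclideanSpace_fin
  set K := sourceConst n κ C₀ with hKdef
  set A := P ^ 2 + M ^ 2 * D
  set G : Ep n → ℝ := fun y =>
    2 * C₀ * K * (2 / ρ ^ 2) ^ 2 * D * A * algWeight (ρ / D) (2 * n) y₀ y with hG
  have hG_integral : ∫ y, G y = massConst n κ C₀ ρ * D ^ n * A := by
    rw [hG, integral_const_mul, integral_algWeight ha, hfinrank, massConst, ← hKdef]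
    linear_combination 2 * C₀ * K * (2 / ρ ^ 2) ^ 2 * A *
      (∫ z : Ep n, algWeight 1 (2 * n) 0 z) * mul_inv_div_pow_pred hn ρ D
  rw [← hG_integral]
  refine setIntegral_Omega_le
    (F := fun y => K * (2 / ρ ^ 2) * A * algWeight (ρ / D) (2 * n + 1) y₀ y)
    (isOpen_Omega hg.smooth_top.continuousOn hg.smooth_bot.continuousOn le_rfl).measurableSet
    hInt.aestronglyMeasurable (fun x _ => sq_nonneg _) (fun x hx => ?_) ?_ (fun y => ?_) ?_
    (fun y => ?_) fun y hy => ?_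
  · exact sq_localWeight_mul_le (one_le_two_div_sq hρ hρ1) hK
      (add_sq_le_mul_one_add_sq hρ hρ1 hD0 hD2 _) (hq x hx)
  · exact ((contDiff_algWeight _ _ _).continuous.const_mul _).measurable
  · have := algWeight_pos (ρ / D) (2 * n + 1) y₀ y
    positivity
  · exact (integrable_algWeight ha.ne' (by omega) y₀).const_mul _
  · have := algWeight_pos (ρ / D) (2 * n) y₀ y
    positivity
  · rw [mul_assoc]
    refine (mul_le_mul_of_nonneg_left (hg.algWeight_succ_mul_gap_le hD hD2 hρ hρ1 (2 * n) hy.le)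
      (by positivity)).trans_eq ?_
    simp only [hG]
    ring

end NarrowGap

/-- The constant in front of `D ^ (4 (n + 1))` in the error caused by the weight far from its
center; `L` bounds the slope of the cutoff. -/
def tailConst (n : ℕ) (ρ L : ℝ) : ℝ :=
  n * ((2 * (n + 1 : ℕ) / ρ + L) / ρ ^ (4 * (n + 1))) ^ 2

lemma tailConst_nonneg (n : ℕ) (ρ L : ℝ) : 0 ≤ tailConst n ρ L := by
  unfold tailConst
  positivity

lemma add_sq_le_two {ε s : ℝ} (hε : ε ≤ 1) (hs0 : 0 ≤ s) (hs : s ≤ 1 / 2) : ε + s ^ 2 ≤ 2 := by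
  linarith [pow_le_one₀ (n := 2) hs0 (by linarith)]

namespace NarrowGap

variable {n : ℕ} {ε κ C₀ ρ D L : ℝ} {h1 h2 φ ψ : Ep n → ℝ} {u : Efull n → ℝ} {x₀ : Efull n}
  (hg : NarrowGap n ε κ C₀ h1 h2) (hε : ε ≤ 1) (hn : 0 < n)
  (hφ : ContDiffOn ℝ 2 φ (closedBall 0 1)) (hψ : ContDiffOn ℝ 2 ψ (closedBall 0 1))
  (hu : HarmBV n ε h1 h2 u φ ψ) (hx₀ : ‖x₀.1‖ ≤ 1 / 2) (hD : D = ε + ‖x₀.1‖ ^ 2)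
  (hρ : 0 < ρ) (hρ16 : ρ ≤ 1 / 16) (hsmall : 24 * n * (n + 1 : ℕ) * C₀ * ρ ≤ 1)
include hg hn hx₀ hD hρ hsmall

lemma div_scale_mul_gap_le_one : ρ / D * gap ε h1 h2 x₀.1 ≤ 1 := by
  have hD0 := hg.scale_pos hD
  have hC₀ := hg.const_pos
  have hgap : gap ε h1 h2 x₀.1 ≤ C₀ * D := hD ▸ hg.gap_le (by linarith)
  have hfactor : (1 : ℝ) ≤ 24 * n * (n + 1 : ℕ) := by
    exact_mod_cast Nat.one_le_iff_ne_zero.2 (by positivity)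
  calc ρ / D * gap ε h1 h2 x₀.1 ≤ ρ / D * (C₀ * D) := by gcongr
    _ = 1 * (C₀ * ρ) := by field_simp
    _ ≤ 24 * n * (n + 1 : ℕ) * (C₀ * ρ) := by gcongr
    _ ≤ 1 := by rwa [← mul_assoc]

include hε hφ hψ hu hρ16

lemma setIntegral_OmegaHat_sub_util_le (hL : ∀ y, ‖fderiv ℝ (cutoff n) y‖ ≤ L) :
    ∫ x in OmegaHat n ε h1 h2 x₀ (gap ε h1 h2 x₀.1),
        ‖fderiv ℝ (fun z => u z - util n ε h1 h2 φ ψ z) x‖ ^ 2 ≤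
      n * 4 ^ (n + 1) * (8 * (tailConst n ρ L * D ^ (4 * (n + 1)) *
          (∫ x in Omega n ε h1 h2 1, (u x - util n ε h1 h2 φ ψ x) ^ 2) +
        massConst n κ C₀ ρ * D ^ n *
          (|φ x₀.1 - ψ x₀.1| ^ 2 + (C2norm n φ + C2norm n ψ) ^ 2 * D))) := by
  have hD0 := hg.scale_pos hD
  have hD2 : D ≤ 2 := hD ▸ add_sq_le_two hε (norm_nonneg _) hx₀
  have hw := hg.vanishesOnGraphs_sub_util hφ hψ hu
  have hη := contDiff_localWeight (ρ / D) (n + 1) x₀.1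
  have hsource := hg.setIntegral_sq_localWeight_mul_le hD hD2 hρ (by linarith) hn
    (fun x hx => by
      rw [hg.lapl_sub_util hφ hψ hu hx, mul_neg, neg_sq, hD]
      exact hg.sq_gap_mul_lapl_util_le hε hφ hψ (by linarith) hx)
    (hw.integrableOn_weight_gap_mul_lapl_sq hg.smoothGap hη)
  have hslope (y : Ep n) (_ : ‖y‖ < 1) :
      n * ‖fderiv ℝ (localWeight n (ρ / D) (n + 1) x₀.1) y‖ ^ 2 ≤
        1 / 16 * (localWeight n (ρ / D) (n + 1) x₀.1 y / gap ε h1 h2 y) ^ 2 +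
          tailConst n ρ L * D ^ (4 * (n + 1)) :=
    (hg.norm_fderiv_localWeight_sq_le hD hx₀ hρ hρ16 hsmall hL y).trans_eq
      (congrArg _ (tail_eq ρ D n _ (n + 1)))
  refine (hw.setIntegral_OmegaHat_le (m := n + 1) hg.smoothGap hn (div_pos hρ hD0).le
    (hg.div_scale_mul_gap_le_one hn hx₀ hD hρ hsmall) x₀).trans ?_
  gcongr
  refine (hw.setIntegral_weight_fderiv_sq_le hg.smoothGap hη (by norm_num : (3 / 4 : ℝ) < 1)
    (fun y hy => norm_le_of_localWeight_ne_zero _ _ _ hy) hn hslope).trans ?_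
  gcongr

end NarrowGap

/-- The ratio between the length scale of the weight and the width of the gap: small enough that the
slope of the weight is absorbed by the Poincaré inequality across the gap. -/
def weightScale (n : ℕ) (C₀ : ℝ) : ℝ := 1 / (24 * n * (n + 1 : ℕ) * C₀)

section WeightScale

variable {n : ℕ} {C₀ : ℝ} (hn : 0 < n) (hC₀ : 1 ≤ C₀)
include hn hC₀

lemma weightScale_pos : 0 < weightScale n C₀ := by
  unfold weightScale
  positivity

lemma weightScale_le : weightScale n C₀ ≤ 1 / 16 := by
  have hfactor : (16 : ℝ) ≤ 24 * n * (n + 1 : ℕ) := by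
    exact_mod_cast (show 16 ≤ 24 * n * (n + 1) by nlinarith)
  exact one_div_le_one_div_of_le (by norm_num)
    (hfactor.trans (le_mul_of_one_le_right (by positivity) hC₀))

lemma mul_weightScale : 24 * n * (n + 1 : ℕ) * C₀ * weightScale n C₀ = 1 :=
  mul_one_div_cancel (by positivity)

end WeightScale

theorem exists_local_energy_le {n : ℕ} (hn : 0 < n) (κ : ℝ) {C₀ : ℝ} (hC₀ : 1 ≤ C₀) :
    ∃ C : ℝ, 0 < C ∧ ∀ (ε : ℝ) (h1 h2 : Ep n → ℝ), ε ≤ 1 → NarrowGap n ε κ C₀ h1 h2 →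
    ∀ (u : Efull n → ℝ) (φ ψ : Ep n → ℝ), ContDiffOn ℝ 2 φ (closedBall 0 1) →
      ContDiffOn ℝ 2 ψ (closedBall 0 1) → HarmBV n ε h1 h2 u φ ψ →
    ∀ x₀ : Efull n, ‖x₀.1‖ ≤ 1 / 2 →
      ∫ x in OmegaHat n ε h1 h2 x₀ (gap ε h1 h2 x₀.1),
          ‖fderiv ℝ (fun z => u z - util n ε h1 h2 φ ψ z) x‖ ^ 2 ≤
        C * (ε + ‖x₀.1‖ ^ 2) ^ n * (|φ x₀.1 - ψ x₀.1| ^ 2 + (ε + ‖x₀.1‖ ^ 2) *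
          ((∫ x in Omega n ε h1 h2 1, ‖u x - util n ε h1 h2 φ ψ x‖ ^ 2) +
            C2norm n φ ^ 2 + C2norm n ψ ^ 2)) := by
  obtain ⟨L, hL⟩ := exists_norm_fderiv_cutoff_le n
  set ρ := weightScale n C₀
  have hρ : 0 < ρ := weightScale_pos hn hC₀
  have hT := tailConst_nonneg n ρ L
  have hS := massConst_nonneg n κ (zero_le_one.trans hC₀) hρ.le
  set T := tailConst n ρ L
  set S := massConst n κ C₀ ρ
  refine ⟨n * 4 ^ (n + 1) * 8 * (T * 2 ^ (3 * n + 3) + 2 * S) + 1, by positivity,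
    fun ε h1 h2 hε hg u φ ψ hφ hψ hu x₀ hx₀ => ?_⟩
  have hlocal := hg.setIntegral_OmegaHat_sub_util_le hε hn hφ hψ hu hx₀ rfl hρ
    (weightScale_le hn hC₀) (mul_weightScale hn hC₀).le hL
  set D := ε + ‖x₀.1‖ ^ 2
  have hD : 0 < D := hg.scale_pos rfl
  have hD2 : D ≤ 2 := add_sq_le_two hε (norm_nonneg _) hx₀
  have hA : ∫ x in Omega n ε h1 h2 1, ‖u x - util n ε h1 h2 φ ψ x‖ ^ 2 =
      ∫ x in Omega n ε h1 h2 1, (u x - util n ε h1 h2 φ ψ x) ^ 2 := by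
    simp only [Real.norm_eq_abs, sq_abs]
  rw [hA]
  have hA0 : 0 ≤ ∫ x in Omega n ε h1 h2 1, (u x - util n ε h1 h2 φ ψ x) ^ 2 :=
    integral_nonneg fun x => sq_nonneg _
  set A := ∫ x in Omega n ε h1 h2 1, (u x - util n ε h1 h2 φ ψ x) ^ 2
  set P := |φ x₀.1 - ψ x₀.1|
  set R := P ^ 2 + D * (A + C2norm n φ ^ 2 + C2norm n ψ ^ 2)
  calc _ ≤ _ := hlocal
    _ ≤ n * 4 ^ (n + 1) * (8 * ((T * 2 ^ (3 * n + 3) + 2 * S) * D ^ n * R)) := by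
        gcongr
        exact tail_add_source_le hT hS hD.le hD2 hA0
    _ = n * 4 ^ (n + 1) * 8 * (T * 2 ^ (3 * n + 3) + 2 * S) * D ^ n * R := by ring
    _ ≤ (n * 4 ^ (n + 1) * 8 * (T * 2 ^ (3 * n + 3) + 2 * S) + 1) * D ^ n * R := by
        gcongr
        exact (lt_add_one _).le

end

lemma mul_pow_mul_add_le {C D t P A : ℝ} (n : ℕ) (hC : 0 ≤ C) (hD : 0 ≤ D) (hDt : D ≤ 2 * t)
    (hP : 0 ≤ P) (hA : 0 ≤ A) :
    C * D ^ n * (P + D * A) ≤ C * 2 ^ (n + 1) * t ^ n * (P + t * A) := by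
  have ht : 0 ≤ t := by linarith
  calc C * D ^ n * (P + D * A) ≤ C * (2 * t) ^ n * (2 * P + 2 * t * A) := by
        gcongr
        exact le_mul_of_one_le_left hP one_le_two
    _ = C * 2 ^ (n + 1) * t ^ n * (P + t * A) := by ring

theorem stmt18_general {n : ℕ} (hn : 0 < n) (κ : ℝ) {C₀ : ℝ} (hC₀ : 1 ≤ C₀) :
    ∃ C : ℝ, 0 < C ∧ ∀ (ε : ℝ) (h1 h2 : Ep n → ℝ), ε ≤ 1 → NarrowGap n ε κ C₀ h1 h2 →
    ∀ (u : Efull n → ℝ) (φ ψ : Ep n → ℝ),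
      ContDiffOn ℝ 2 φ (closedBall 0 1) → ContDiffOn ℝ 2 ψ (closedBall 0 1) →
      HarmBV n ε h1 h2 u φ ψ →
    (∀ x₀ ∈ Omega n ε h1 h2 (1 / 2), ‖x₀.1‖ ≤ Real.sqrt ε →
      (∫ x in OmegaHat n ε h1 h2 x₀ (ε + h1 x₀.1 - h2 x₀.1),
          ‖fderiv ℝ (fun z => u z - util n ε h1 h2 φ ψ z) x‖ ^ 2) ≤
        C * ε ^ n * (|φ x₀.1 - ψ x₀.1| ^ 2 +
          ε * ((∫ x in Omega n ε h1 h2 1, ‖u x - util n ε h1 h2 φ ψ x‖ ^ 2) +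
            C2norm n φ ^ 2 + C2norm n ψ ^ 2))) ∧
    (∀ x₀ ∈ Omega n ε h1 h2 (1 / 2), Real.sqrt ε < ‖x₀.1‖ →
      (∫ x in OmegaHat n ε h1 h2 x₀ (ε + h1 x₀.1 - h2 x₀.1),
          ‖fderiv ℝ (fun z => u z - util n ε h1 h2 φ ψ z) x‖ ^ 2) ≤
        C * ‖x₀.1‖ ^ (2 * n) * (|φ x₀.1 - ψ x₀.1| ^ 2 +
          ‖x₀.1‖ ^ 2 * ((∫ x in Omega n ε h1 h2 1, ‖u x - util n ε h1 h2 φ ψ x‖ ^ 2) +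
            C2norm n φ ^ 2 + C2norm n ψ ^ 2))) := by
  obtain ⟨C, hC, hlocal⟩ := exists_local_energy_le hn κ hC₀
  refine ⟨C * 2 ^ (n + 1), by positivity, fun ε h1 h2 hε hg u φ ψ hφ hψ hu => ?_⟩
  have hε0 := hg.eps_pos
  have hrescale {x₀ : Efull n} (hx₀ : x₀ ∈ Omega n ε h1 h2 (1 / 2)) {t : ℝ}
      (ht : ε + ‖x₀.1‖ ^ 2 ≤ 2 * t) :=
    (hlocal ε h1 h2 hε hg u φ ψ hφ hψ hu x₀ hx₀.1.le).trans
      (mul_pow_mul_add_le n hC.le (by positivity) ht (sq_nonneg _) (by positivity))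
  refine ⟨fun x₀ hx₀ hnear => hrescale hx₀ ?_, fun x₀ hx₀ hfar => ?_⟩
  · linarith [(Real.le_sqrt (norm_nonneg _) hε0.le).1 hnear]
  · rw [pow_mul]
    exact hrescale hx₀ (by linarith [(Real.sqrt_lt' ((Real.sqrt_nonneg ε).trans_lt hfar)).1 hfar])

lemma HGeom.narrowGap {n : ℕ} {ε κ0 κ1 C₀ : ℝ} {h1 h2 : Ep n → ℝ} (hgeom : HGeom n ε κ0 κ1 h1 h2)
    (hε : 0 < ε) (hC₀ : 1 ≤ C₀) (hδ : DeltaComp n ε C₀ h1 h2) : NarrowGap n ε κ1 C₀ h1 h2 := by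
  obtain ⟨hh1, hh2, -, -, -, hflat1, hflat2, -, hC2⟩ := hgeom
  exact ⟨hε, hC₀, hh1, hh2, hflat1, hflat2, hC2, hδ⟩

theorem stmt18 (n : ℕ) (hn : 2 ≤ n) (κ0 κ1 C₀ : ℝ)
    (hκ0 : 0 < κ0) (hκ1 : 0 < κ1) (hC₀ : 1 ≤ C₀) :
    ∃ ε₀ ∈ Set.Ioo (0:ℝ) 1, ∃ C : ℝ, 0 < C ∧
    ∀ ε ∈ Set.Ioo (0:ℝ) ε₀, ∀ h1 h2 : Ep n → ℝ,
      HGeom n ε κ0 κ1 h1 h2 → DeltaComp n ε C₀ h1 h2 →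
    ∀ (u : Efull n → ℝ) (φ ψ : Ep n → ℝ),
      ContDiffOn ℝ 2 φ (closedBall 0 1) → ContDiffOn ℝ 2 ψ (closedBall 0 1) →
      HarmBV n ε h1 h2 u φ ψ →
    (∀ x₀ ∈ Omega n ε h1 h2 (1/2), ‖x₀.1‖ ≤ Real.sqrt ε →
      (∫ x in OmegaHat n ε h1 h2 x₀ (ε + h1 x₀.1 - h2 x₀.1),
          ‖fderiv ℝ (fun z => u z - util n ε h1 h2 φ ψ z) x‖^2) ≤
        C * ε^n * (|φ x₀.1 - ψ x₀.1|^2 +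
          ε * ((∫ x in Omega n ε h1 h2 1, ‖u x - util n ε h1 h2 φ ψ x‖^2) +
            (C2norm n φ)^2 + (C2norm n ψ)^2))) ∧
    (∀ x₀ ∈ Omega n ε h1 h2 (1/2), Real.sqrt ε < ‖x₀.1‖ → ‖x₀.1‖ < 1/2 →
      (∫ x in OmegaHat n ε h1 h2 x₀ (ε + h1 x₀.1 - h2 x₀.1),
          ‖fderiv ℝ (fun z => u z - util n ε h1 h2 φ ψ z) x‖^2) ≤
        C * ‖x₀.1‖^(2*n) * (|φ x₀.1 - ψ x₀.1|^2 +
          ‖x₀.1‖^2 * ((∫ x in Omega n ε h1 h2 1, ‖u x - util n ε h1 h2 φ ψ x‖^2) +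
            (C2norm n φ)^2 + (C2norm n ψ)^2))) := by
  obtain ⟨C, hC, hmain⟩ := stmt18_general (by omega : 0 < n) κ1 hC₀
  refine ⟨1 / 2, by norm_num, C, hC, fun ε hε h1 h2 hgeom hδ u φ ψ hφ hψ hu => ?_⟩
  have hbounds := hmain ε h1 h2 (by linarith [hε.2]) (hgeom.narrowGap hε.1 hC₀ hδ) u φ ψ hφ hψ hu
  exact hbounds.imp_right fun hfar x₀ hx₀ hlt _ => hfar x₀ hx₀ hlt
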